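/- arXiv:1603.08324 — 2 statements merged into one kernel-verified Lean document; each statement's English description precedes it below -/
import Mathlib

section
/- Let Ω ⊂ ℝ² be a convex quadrangle, i.e. the convex hull of four points in convex position (no point lies in the convex hull of the other three). If Ω satisfies the balance law at the origin, then Ω is a parallelogram centered at the origin, i.e. Ω = −Ω. -/
open MeasureTheory Metric Set
open scoped Pointwise

noncomputable section

/-- `Ω` satisfies the balance law at the origin: for almost every `r ≥ 0`, the
vector-valued integral of `χ_Ω(r v) • v` over the unit sphere (with respect to the
surface, i.e. `(m-1)`-dimensional Hausdorff, measure) vanishes. -/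
def SatisfiesBalanceLaw {m : ℕ} (Ω : Set (EuclideanSpace ℝ (Fin m))) : Prop :=
  ∀ᵐ r ∂(volume.restrict (Ici (0 : ℝ))),
    (∫ v in sphere (0 : EuclideanSpace ℝ (Fin m)) 1,
      (Ω.indicator (fun _ => (1 : ℝ)) (r • v)) • v ∂(μH[(m : ℝ) - 1])) = 0


lemma hasDerivAt_invsqrt_pow (c u : ℝ) (h : c < u) (n : ℕ) :
    HasDerivAt (fun u : ℝ => ((√(u - c))⁻¹) ^ (n+1)) (-(((n:ℝ)+1)/2) * ((√(u - c))⁻¹) ^ (n+3)) u := by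
  have hpos : 0 < u - c := by linarith
  have hs : 0 < √(u - c) := Real.sqrt_pos.2 hpos
  have h1 : HasDerivAt (fun u : ℝ => √(u - c)) (1 / (2 * √(u - c))) u :=
    ((hasDerivAt_id u).sub_const c).sqrt hpos.ne'
  have h2 := (h1.inv hs.ne').pow (n+1)
  refine h2.congr_deriv ?_
  rw [show ((fun u : ℝ => √(u - c))⁻¹ u) = (√(u - c))⁻¹ from rfl]
  push_cast
  have e : (-(1 / (2 * √(u - c))) / √(u - c) ^ 2) = -(1/2) * ((√(u - c))⁻¹) ^ 3 := by
    field_simp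
  rw [e]
  ring

lemma indep_pow {w : Fin 4 → ℂ} {c : Fin 4 → ℝ} {a b : ℝ} (hc : ∀ i, c i < a)
    (K : ℂ) (h : ∀ u ∈ Ioo a b, K + ∑ i, (√(u - c i)) • w i = 0) (k : ℕ) :
    ∀ u ∈ Ioo a b, ∑ i, (((√(u - c i))⁻¹) ^ (2*k+1)) • w i = 0 := by
  induction k with
  | zero =>
    intro u hu
    have hd : HasDerivAt (fun u : ℝ => K + ∑ i, (√(u - c i)) • w i)
        (∑ i, (1 / (2 * √(u - c i))) • w i) u := by
      refine HasDerivAt.const_add _ (HasDerivAt.fun_sum fun i _ => ?_)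
      have := hc i
      exact HasDerivAt.smul_const (((hasDerivAt_id u).sub_const (c i)).sqrt (by simp; linarith [hu.1])) _
    have h0 : HasDerivAt (fun u : ℝ => K + ∑ i, (√(u - c i)) • w i) 0 u := by
      refine (hasDerivAt_const u (0:ℂ)).congr_of_eventuallyEq ?_
      filter_upwards [isOpen_Ioo.mem_nhds hu] with v hv using h v hv
    have := hd.unique h0
    have h2 : ∑ i, (((√(u - c i))⁻¹) ^ (2*0+1)) • w i = (2:ℝ) • ∑ i, (1 / (2 * √(u - c i))) • w i := by
      rw [Finset.smul_sum]
      refine Finset.sum_congr rfl fun i _ => ?_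
      rw [smul_smul]; congr 1; field_simp; simp
    rw [h2, this, smul_zero]
  | succ k ih =>
    intro u hu
    have hd : HasDerivAt (fun u : ℝ => ∑ i, (((√(u - c i))⁻¹) ^ (2*k+1)) • w i)
        (∑ i, (-((((2*k:ℕ):ℝ)+1)/2) * ((√(u - c i))⁻¹) ^ (2*k+3)) • w i) u := by
      refine (HasDerivAt.fun_sum fun i _ => ?_)
      have := hc i
      exact HasDerivAt.smul_const (hasDerivAt_invsqrt_pow (c i) u (by linarith [hu.1]) (2*k)) _
    have h0 : HasDerivAt (fun u : ℝ => ∑ i, (((√(u - c i))⁻¹) ^ (2*k+1)) • w i) 0 u := by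
      refine (hasDerivAt_const u (0:ℂ)).congr_of_eventuallyEq ?_
      filter_upwards [isOpen_Ioo.mem_nhds hu] with v hv using ih v hv
    have := hd.unique h0
    simp_rw [mul_smul] at this
    rw [← Finset.smul_sum] at this
    rcases smul_eq_zero.1 this with h | h
    · exfalso
      have : (0:ℝ) ≤ ((2*k:ℕ):ℝ) := by positivity
      linarith
    · have e : 2 * (k+1) + 1 = 2 * k + 3 := by ring
      rw [e]; exact h

lemma indep {w : Fin 4 → ℂ} {c : Fin 4 → ℝ} {a b : ℝ} (hab : a < b) (hc : ∀ i, c i < a)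
    (K : ℂ) (h : ∀ u ∈ Ioo a b, K + ∑ i, (√(u - c i)) • w i = 0) (i : Fin 4) :
    ∑ j, (if c j = c i then w j else 0) = 0 := by
  classical
  obtain ⟨u, hu⟩ := nonempty_Ioo.2 hab
  set s : Fin 4 → ℝ := fun i => (√(u - c i))⁻¹ with hs
  have hpos : ∀ i, 0 < s i := fun i => by
    have := hc i
    have : 0 < √(u - c i) := Real.sqrt_pos.2 (by linarith [hu.1])
    positivity
  have hinj : ∀ i j, s i ^ 2 = s j ^ 2 → c i = c j := by
    intro i j hij
    have h1 := hc i
    have h2 := hc j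
    simp only [hs, inv_pow] at hij
    rw [Real.sq_sqrt (by linarith [hu.1]), Real.sq_sqrt (by linarith [hu.1])] at hij
    have := inv_injective hij
    linarith
  have hP : ∀ p : Polynomial ℝ, ∑ j, (s j * p.eval (s j ^ 2)) • w j = 0 := by
    intro p
    induction p using Polynomial.induction_on' with
    | add p q hp hq =>
      simp only [Polynomial.eval_add, mul_add, add_smul, Finset.sum_add_distrib, hp, hq, add_zero]
    | monomial n r =>
      have := indep_pow hc K h n u hu
      have h2 : ∑ j, (s j * (Polynomial.monomial n r).eval (s j ^ 2)) • w j
          = r • ∑ i, (((√(u - c i))⁻¹) ^ (2*n+1)) • w i := by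
        rw [Finset.smul_sum]
        refine Finset.sum_congr rfl fun j _ => ?_
        rw [smul_smul, Polynomial.eval_monomial]
        congr 1
        simp only [hs]
        ring
      rw [h2, this, smul_zero]
  have := hP (∏ j ∈ Finset.univ.filter (fun j => c j ≠ c i), (Polynomial.X - Polynomial.C (s j ^ 2)))
  simp only [Polynomial.eval_prod, Polynomial.eval_sub, Polynomial.eval_X, Polynomial.eval_C] at this
  set Q : ℝ := s i * ∏ j ∈ Finset.univ.filter (fun j => c j ≠ c i), (s i ^ 2 - s j ^ 2) with hQ
  have hQ0 : Q ≠ 0 := by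
    refine mul_ne_zero (hpos i).ne' (Finset.prod_ne_zero_iff.2 fun j hj => ?_)
    intro h0
    exact (Finset.mem_filter.1 hj).2 (hinj i j (by linarith)).symm
  have h3 : Q • ∑ j, (if c j = c i then w j else 0) = 0 := by
    refine Eq.trans ?_ this
    rw [Finset.smul_sum]
    refine Finset.sum_congr rfl fun j _ => ?_
    split_ifs with hj
    · have : s j = s i := by simp only [hs, hj]
      rw [this]
    · rw [Finset.prod_eq_zero (i := j) (by simp [hj]) (by simp), smul_zero, mul_zero, zero_smul]
  exact (smul_eq_zero.1 h3).resolve_left hQ0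


/-- planar cross product -/
def cr (a b : ℂ) : ℝ := a.re * b.im - a.im * b.re

lemma four_unit {T1 T2 T3 T4 : ℂ} (h1 : ‖T1‖ = 1) (h2 : ‖T2‖ = 1) (h3 : ‖T3‖ = 1) (h4 : ‖T4‖ = 1)
    (c12 : 0 < cr T1 T2) (c41 : 0 < cr T4 T1) (h : T1 + T2 + T3 + T4 = 0) :
    T3 = -T1 ∧ T4 = -T2 := by
  have key : ∀ T : ℂ, ‖T‖ = 1 → T * (starRingEnd ℂ) T = 1 := by
    intro T hT
    rw [Complex.mul_conj, Complex.normSq_eq_norm_sq, hT]; simp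
  have k1 := key _ h1
  have k2 := key _ h2
  have k3 := key _ h3
  have k4 := key _ h4
  have hc := congrArg (starRingEnd ℂ) h
  simp only [map_add, map_zero] at hc
  set S1 := (starRingEnd ℂ) T1
  set S2 := (starRingEnd ℂ) T2
  set S3 := (starRingEnd ℂ) T3
  set S4 := (starRingEnd ℂ) T4
  have n2 : T1 + T2 ≠ 0 := by
    intro h0
    have : T2 = -T1 := by linear_combination h0
    rw [this] at c12; simp [cr] at c12; linarith
  have n4 : T1 + T4 ≠ 0 := by
    intro h0
    have : T4 = -T1 := by linear_combination h0
    rw [this] at c41; simp [cr] at c41; linarith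
  have e : (T1 + T3) * ((T1 + T2) * (T1 + T4)) = 0 := by
    have e1 : (T1 + T3) * (T2 * T4 - T1 * T3) = 0 := by
      have : T1 * T2 * T3 * T4 * (S1 + S2 + S3 + S4) = 0 := by rw [hc]; ring
      linear_combination this - T2*T3*T4 * k1 - T1*T3*T4*k2 - T1*T2*T4*k3 - T1*T2*T3*k4 - T1*T3*h
    have e2 : (T1 + T2) * (T1 + T4) = T2 * T4 - T1 * T3 := by linear_combination T1 * h
    rw [e2, e1]
  have e3 : T1 + T3 = 0 := by
    rcases mul_eq_zero.1 e with h | h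
    · exact h
    · exact absurd h (mul_ne_zero n2 n4)
  exact ⟨by linear_combination e3, by linear_combination h - e3⟩

lemma unit_re_im {T : ℂ} (h : ‖T‖ = 1) : T.re ^ 2 + T.im ^ 2 = 1 := by
  have := Complex.sq_norm T
  rw [h, Complex.normSq_apply] at this
  linarith

lemma norm_re_im {T : ℂ} {R : ℝ} (h : ‖T‖ = R) : T.re ^ 2 + T.im ^ 2 = R ^ 2 := by
  have := Complex.sq_norm T
  rw [h, Complex.normSq_apply] at this
  linarith

lemma norm_re_im_le {T : ℂ} {R : ℝ} (h : ‖T‖ ≤ R) : T.re ^ 2 + T.im ^ 2 ≤ R ^ 2 := by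
  have := Complex.sq_norm T
  rw [Complex.normSq_apply] at this
  have h2 : ‖T‖^2 ≤ R^2 := by gcongr
  linarith

lemma lin_indep {T1 T2 : ℂ} (h : cr T1 T2 ≠ 0) {x y : ℝ} (e : x • T1 + y • T2 = 0) : x = 0 ∧ y = 0 := by
  have e1 := congrArg Complex.re e
  have e2 := congrArg Complex.im e
  simp at e1 e2
  unfold cr at h
  constructor
  · have : x * (T1.re * T2.im - T1.im * T2.re) = 0 := by linear_combination T2.im * e1 - T2.re * e2
    exact (mul_eq_zero.1 this).resolve_right h
  · have : y * (T1.re * T2.im - T1.im * T2.re) = 0 := by linear_combination T1.re * e2 - T1.im * e1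
    exact (mul_eq_zero.1 this).resolve_right h

/-- two unit vectors summing to minus twice a unit vector -/
lemma two_one_one {T1 T2 T4 : ℂ} (h1 : ‖T1‖ = 1) (h2 : ‖T2‖ = 1) (h4 : ‖T4‖ = 1)
    (h : (2:ℝ) • T1 + T2 + T4 = 0) : cr T1 T2 = 0 := by
  have a1 := unit_re_im h1
  have a2 := unit_re_im h2
  have a4 := unit_re_im h4
  have e1 := congrArg Complex.re h
  have e2 := congrArg Complex.im h
  simp at e1 e2
  have f1 : T4.re = -2 * T1.re - T2.re := by linarith
  have f2 : T4.im = -2 * T1.im - T2.im := by linarith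
  rw [f1, f2] at a4
  have dot : T1.re * T2.re + T1.im * T2.im = -1 := by nlinarith
  have : cr T1 T2 ^ 2 = 0 := by
    have : cr T1 T2 ^ 2 = (T1.re ^ 2 + T1.im ^ 2) * (T2.re ^ 2 + T2.im ^ 2) - (T1.re * T2.re + T1.im * T2.im) ^ 2 := by
      unfold cr; ring
    rw [this, a1, a2, dot]; norm_num
  exact pow_eq_zero_iff (two_ne_zero) |>.1 this

set_option maxHeartbeats 1000000 in
/-- The squared decomposition. -/
lemma special {A B C D T1 T2 T3 T4 : ℂ} {l1 l2 l3 l4 R : ℝ}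
    (h1 : ‖T1‖ = 1) (h2 : ‖T2‖ = 1) (h3 : ‖T3‖ = 1) (h4 : ‖T4‖ = 1)
    (p1 : 0 < l1) (p2 : 0 < l2) (p3 : 0 < l3) (p4 : 0 < l4)
    (q1 : B = A + l1 • T1) (q2 : C = B + l2 • T2) (q3 : D = C + l3 • T3) (q4 : A = D + l4 • T4)
    (c34 : 0 < cr T3 T4) (c41 : 0 < cr T4 T1)
    (hA : ‖A‖ = R) (hB : ‖B‖ = R) (hC : ‖C‖ = R) (hD : ‖D‖ ≤ R)
    (e12 : cr T1 A ^ 2 = cr T2 B ^ 2) (e13 : cr T1 A ^ 2 = cr T3 C ^ 2) (e14 : cr T1 A ^ 2 = cr T4 D ^ 2)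
    (h : (2:ℝ) • T1 + (2:ℝ) • T2 + T3 + T4 = 0) : False := by
  have a1 := unit_re_im h1
  have a2 := unit_re_im h2
  have a3 := unit_re_im h3
  have a4 := unit_re_im h4
  have nA := norm_re_im hA
  have nB := norm_re_im hB
  have nC := norm_re_im hC
  have nD := norm_re_im_le hD
  have lag : ∀ T X : ℂ, T.re ^ 2 + T.im ^ 2 = 1 → X.re ^ 2 + X.im ^ 2 = R ^ 2 →
      (T.re * X.re + T.im * X.im) ^ 2 + cr T X ^ 2 = R ^ 2 := by
    intro T X hT hX
    have : (T.re * X.re + T.im * X.im) ^ 2 + cr T X ^ 2 = (T.re ^ 2 + T.im ^ 2) * (X.re ^ 2 + X.im ^ 2) := by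
      unfold cr; ring
    rw [this, hT, hX, one_mul]
  have q1r := congrArg Complex.re q1
  have q1i := congrArg Complex.im q1
  have q2r := congrArg Complex.re q2
  have q2i := congrArg Complex.im q2
  have q3r := congrArg Complex.re q3
  have q3i := congrArg Complex.im q3
  have q4r := congrArg Complex.re q4
  have q4i := congrArg Complex.im q4
  simp at q1r q1i q2r q2i q3r q3i q4r q4i
  have d1 : T1.re * A.re + T1.im * A.im = - l1 / 2 := by
    rw [q1r, q1i] at nB
    have : l1 * (2 * (T1.re * A.re + T1.im * A.im) + l1) = 0 := by
      linear_combination nB - nA - l1 ^ 2 * a1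
    rcases mul_eq_zero.1 this with h | h <;> linarith
  have d2 : T2.re * B.re + T2.im * B.im = - l2 / 2 := by
    rw [q2r, q2i] at nC
    have : l2 * (2 * (T2.re * B.re + T2.im * B.im) + l2) = 0 := by
      linear_combination nC - nB - l2 ^ 2 * a2
    rcases mul_eq_zero.1 this with h | h <;> linarith
  have g1 := lag T1 A a1 nA
  have g2 := lag T2 B a2 nB
  have g3 := lag T3 C a3 nC
  have g4 := lag T4 A a4 nA
  have e4' : cr T4 A = cr T4 D := by
    rw [q4]; simp [cr]; ring
  rw [e4', ← e14] at g4
  rw [← e13] at g3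
  rw [← e12, d2] at g2
  rw [d1] at g1
  have l12 : l1 = l2 := by
    have : l1 ^ 2 = l2 ^ 2 := by linarith
    exact (pow_left_inj₀ p1.le p2.le two_ne_zero).1 this
  have clos : (l3 - l1/2) • T3 + (l4 - l1/2) • T4 = 0 := by
    have : l1 • T1 + l1 • T2 + l3 • T3 + l4 • T4 = 0 := by
      have e : A = A + l1 • T1 + l2 • T2 + l3 • T3 + l4 • T4 := by
        rw [← q1, ← q2, ← q3, ← q4]
      rw [← l12] at e
      linear_combination -e
    simp only [Complex.real_smul] at this h ⊢
    push_cast at *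
    linear_combination this - (l1:ℂ)/2 * h
  obtain ⟨m3, m4⟩ := lin_indep c34.ne' clos
  have l3' : l3 = l1/2 := by linarith
  have l4' : l4 = l1/2 := by linarith
  have d3 : T3.re * D.re + T3.im * D.im = 0 := by
    have x : T3.re * C.re + T3.im * C.im < 0 := by
      have : l3 * (2 * (T3.re * C.re + T3.im * C.im) + l3) ≤ 0 := by
        rw [q3r, q3i] at nD
        have : l3 * (2 * (T3.re * C.re + T3.im * C.im) + l3) = (C.re + l3 * T3.re) ^ 2 + (C.im + l3 * T3.im) ^ 2 - R ^ 2 := by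
          linear_combination - nC - l3 ^ 2 * a3
        linarith
      have := nonpos_of_mul_nonpos_right this p3
      linarith
    have y : T3.re * C.re + T3.im * C.im = - (l1 / 2) := by
      have : (T3.re * C.re + T3.im * C.im) ^ 2 = (l1/2) ^2 := by linarith
      rcases sq_eq_sq_iff_eq_or_eq_neg.1 this with h | h <;> linarith
    rw [q3r, q3i, l3']
    linear_combination y + l1 / 2 * a3
  have d4 : T4.re * D.re + T4.im * D.im = 0 := by
    have x : 0 < T4.re * A.re + T4.im * A.im := by
      have : l4 * (-2 * (T4.re * A.re + T4.im * A.im) + l4) ≤ 0 := by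
        have r1 : D.re = A.re - l4 * T4.re := by linarith
        have r2 : D.im = A.im - l4 * T4.im := by linarith
        rw [r1, r2] at nD
        have : l4 * (-2 * (T4.re * A.re + T4.im * A.im) + l4) = (A.re - l4 * T4.re) ^ 2 + (A.im - l4 * T4.im) ^ 2 - R ^ 2 := by
          linear_combination - nA - l4 ^ 2 * a4
        linarith
      have := nonpos_of_mul_nonpos_right this p4
      linarith
    have y : T4.re * A.re + T4.im * A.im = (l1 / 2) := by
      have : (T4.re * A.re + T4.im * A.im) ^ 2 = (l1/2) ^2 := by linarith
      rcases sq_eq_sq_iff_eq_or_eq_neg.1 this with h | h <;> linarith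
    rw [q4r, q4i, l4'] at y
    linear_combination y - l1 / 2 * a4
  have D0 : D.re = 0 ∧ D.im = 0 := by
    unfold cr at c34
    constructor
    · have : (T3.re * T4.im - T3.im * T4.re) * D.re = 0 := by linear_combination T4.im * d3 - T3.im * d4
      exact (mul_eq_zero.1 this).resolve_left c34.ne'
    · have : (T3.re * T4.im - T3.im * T4.re) * D.im = 0 := by linear_combination T3.re * d4 - T4.re * d3
      exact (mul_eq_zero.1 this).resolve_left c34.ne'
  have z : cr T4 D = 0 := by simp [cr, D0]
  rw [z] at e14
  have z1 : cr T1 A = 0 := by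
    have : cr T1 A ^ 2 = 0 := by rw [e14]; norm_num
    exact pow_eq_zero_iff two_ne_zero |>.1 this
  have z2 : cr T1 A = - (l4 * cr T4 T1) := by
    unfold cr
    rw [q4r, q4i, D0.1, D0.2]; ring
  have := mul_pos p4 c41
  linarith

lemma para {A B C D T1 T2 T3 T4 : ℂ} {l1 l2 l3 l4 : ℝ}
    (p2 : 0 < l2) (p3 : 0 < l3)
    (q1 : B = A + l1 • T1) (q2 : C = B + l2 • T2) (q3 : D = C + l3 • T3) (q4 : A = D + l4 • T4)
    (c12 : 0 < cr T1 T2) (c23 : 0 < cr T2 T3)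
    (e13 : cr T1 A ^ 2 = cr T3 C ^ 2) (e24 : cr T2 B ^ 2 = cr T4 D ^ 2)
    (h3 : T3 = -T1) (h4 : T4 = -T2) : A + C = 0 ∧ B + D = 0 := by
  subst h3 h4
  have clos : (l1 - l3) • T1 + (l2 - l4) • T2 = 0 := by
    have e : A = A + l1 • T1 + l2 • T2 + l3 • (-T1) + l4 • (-T2) := by
      rw [← q1, ← q2, ← q3, ← q4]
    simp only [Complex.real_smul] at *
    push_cast at *
    linear_combination -e
  obtain ⟨m1, m2⟩ := lin_indep c12.ne' clos
  have s : A + C = B + D := by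
    have : l3 = l1 := by linarith
    rw [q3, q1, this]; simp; ring
  have x1 : cr T1 (A + C) = 0 := by
    have : cr T1 (C - A) * cr T1 (A + C) = 0 := by
      simp only [cr, Complex.neg_re, Complex.neg_im, Complex.add_re, Complex.add_im, Complex.sub_re, Complex.sub_im] at e13 ⊢
      linear_combination -e13
    refine (mul_eq_zero.1 this).resolve_left ?_
    have : cr T1 (C - A) = l2 * cr T1 T2 := by
      rw [q2, q1]; simp [cr]; ring
    rw [this]; positivity
  have x2 : cr T2 (A + C) = 0 := by
    have : cr T2 (D - B) * cr T2 (B + D) = 0 := by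
      simp only [cr, Complex.neg_re, Complex.neg_im, Complex.add_re, Complex.add_im, Complex.sub_re, Complex.sub_im] at e24 ⊢
      linear_combination -e24
    rw [s]
    refine (mul_eq_zero.1 this).resolve_left ?_
    have : cr T2 (D - B) = l3 * cr T2 (-T1) := by
      rw [q3, q2]; simp [cr]; ring
    rw [this]; positivity
  have : A + C = 0 := by
    set X := A + C
    unfold cr at x1 x2 c12
    apply Complex.ext
    · have : (T1.re * T2.im - T1.im * T2.re) * X.re = 0 := by linear_combination T2.re * x1 - T1.re * x2
      exact (mul_eq_zero.1 this).resolve_left c12.ne'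
    · have : (T1.re * T2.im - T1.im * T2.re) * X.im = 0 := by linear_combination T2.im * x1 - T1.im * x2
      exact (mul_eq_zero.1 this).resolve_left c12.ne'
  exact ⟨this, s ▸ this⟩

/-- The group case analysis. -/
lemma core {A B C D T1 T2 T3 T4 : ℂ} {l1 l2 l3 l4 R b c d : ℝ}
    (h1 : ‖T1‖ = 1) (h2 : ‖T2‖ = 1) (h3 : ‖T3‖ = 1) (h4 : ‖T4‖ = 1)
    (p1 : 0 < l1) (p2 : 0 < l2) (p3 : 0 < l3) (p4 : 0 < l4)
    (q1 : B = A + l1 • T1) (q2 : C = B + l2 • T2) (q3 : D = C + l3 • T3) (q4 : A = D + l4 • T4)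
    (c12 : 0 < cr T1 T2) (c23 : 0 < cr T2 T3) (c34 : 0 < cr T3 T4) (c41 : 0 < cr T4 T1)
    (hA : ‖A‖ = R)
    (hB : (‖B‖ = R ∧ b = 1) ∨ (‖B‖ ≤ R ∧ b = 0))
    (hC : (‖C‖ = R ∧ c = 1) ∨ (‖C‖ ≤ R ∧ c = 0))
    (hD : (‖D‖ = R ∧ d = 1) ∨ (‖D‖ ≤ R ∧ d = 0))
    {e1 e2 e3 e4 : ℝ}
    (he1 : e1 = cr T1 A ^ 2) (he2 : e2 = cr T2 B ^ 2) (he3 : e3 = cr T3 C ^ 2) (he4 : e4 = cr T4 D ^ 2)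
    (g1 : (1 + b) • T1 + (if e2 = e1 then (b + c) • T2 else 0) + (if e3 = e1 then (c + d) • T3 else 0)
      + (if e4 = e1 then (d + 1) • T4 else 0) = 0)
    (g2 : (if e1 = e2 then (1 + b) • T1 else 0) + (b + c) • T2 + (if e3 = e2 then (c + d) • T3 else 0)
      + (if e4 = e2 then (d + 1) • T4 else 0) = 0)
    (g3 : (if e1 = e3 then (1 + b) • T1 else 0) + (if e2 = e3 then (b + c) • T2 else 0) + (c + d) • T3
      + (if e4 = e3 then (d + 1) • T4 else 0) = 0)
    (g4 : (if e1 = e4 then (1 + b) • T1 else 0) + (if e2 = e4 then (b + c) • T2 else 0)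
      + (if e3 = e4 then (c + d) • T3 else 0) + (d + 1) • T4 = 0) :
    A + C = 0 ∧ B + D = 0 := by
  have hb : 0 ≤ b := by rcases hB with h | h <;> linarith [h.2]
  have hc : 0 ≤ c := by rcases hC with h | h <;> linarith [h.2]
  have hd : 0 ≤ d := by rcases hD with h | h <;> linarith [h.2]
  have z : ∀ {x : ℝ} {T : ℂ}, ‖T‖ = 1 → x • T = 0 → x = 0 := by
    intro x T hT h
    rcases smul_eq_zero.1 h with h | h
    · exact h
    · rw [h] at hT; simp at hT
  have crs : ∀ x y : ℂ, cr x y = - cr y x := fun x y => by unfold cr; ring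
  have n14 : ∀ {x y : ℝ}, 1 ≤ x → x • T1 + y • T4 = 0 → False := by
    intro x y hx h
    have := (lin_indep (by rw [crs]; linarith [c41]) h).1
    linarith
  have t1 : ∀ {T T' T'' : ℂ}, ‖T‖ = 1 → ‖T'‖ = 1 → ‖T''‖ = 1 → 0 < cr T T' → (2:ℝ) • T + T' + T'' = 0 → False :=
    fun a1 a2 a3 a4 a5 => a4.ne' (two_one_one a1 a2 a3 a5)
  by_cases e14 : e4 = e1
  · by_cases e12 : e2 = e1 <;> by_cases e13 : e3 = e1
    · rw [if_pos e12, if_pos e13, if_pos e14] at g1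
      rw [he2, he1] at e12
      rw [he3, he1] at e13
      rw [he4, he1] at e14
      have E1 : T1 + T2 + T3 + T4 = 0 → A + C = 0 ∧ B + D = 0 := by
        intro h
        obtain ⟨x, y⟩ := four_unit h1 h2 h3 h4 c12 c41 h
        exact para p2 p3 q1 q2 q3 q4 c12 c23 e13.symm (by rw [e12, e14]) x y
      rcases hB with ⟨hB, rfl⟩ | ⟨hB, rfl⟩ <;> rcases hC with ⟨hC, rfl⟩ | ⟨hC, rfl⟩ <;>
        rcases hD with ⟨hD, rfl⟩ | ⟨hD, rfl⟩
      · apply E1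
        norm_num at g1
        linear_combination g1 / 2
      · norm_num at g1
        exact (special h1 h2 h3 h4 p1 p2 p3 p4 q1 q2 q3 q4 c34 c41 hA hB hC hD e12.symm e13.symm e14.symm
          (by simpa using g1)).elim
      · norm_num at g1
        refine (special h4 h1 h2 h3 p4 p1 p2 p3 q4 q1 q2 q3 c23 c34 hD hA hB hC e14 (by rw [e14, e12])
          (by rw [e14, e13]) ?_).elim
        simp only [Complex.real_smul]
        push_cast
        linear_combination g1
      · norm_num at g1
        exact (t1 h1 h2 h4 c12 (by simpa using g1)).elim
      · norm_num at g1
        refine (special h3 h4 h1 h2 p3 p4 p1 p2 q3 q4 q1 q2 c12 c23 hC hD hA hB (by rw [e14, e13]) (by rw [e13])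
          (by rw [e12, e13]) ?_).elim
        simp only [Complex.real_smul]
        push_cast
        linear_combination g1
      · apply E1
        norm_num at g1
        linear_combination g1
      · norm_num at g1
        exact (t1 h4 h1 h3 c41 (by simp; linear_combination g1)).elim
      · norm_num at g1
        exact (n14 (x := 1) (y := 1) le_rfl (by simpa using g1)).elim
    · have f1 : e1 ≠ e3 := fun h => e13 h.symm
      have f2 : e2 ≠ e3 := fun h => e13 (by rw [← h, e12])
      have f4 : e4 ≠ e3 := fun h => e13 (by rw [← h, e14])
      rw [if_neg f1, if_neg f2, if_neg f4] at g3
      have k3 := z (x := c + d) h3 (by simpa using g3)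
      have c0 : c = 0 := by linarith
      have d0 : d = 0 := by linarith
      subst c0 d0
      rw [if_pos e12, if_neg e13, if_pos e14] at g1
      rcases hB with ⟨hB, rfl⟩ | ⟨hB, rfl⟩
      · norm_num at g1
        exact (t1 h1 h2 h4 c12 (by simpa using g1)).elim
      · norm_num at g1
        exact (n14 (x := 1) (y := 1) le_rfl (by simpa using g1)).elim
    · have f1 : e1 ≠ e2 := fun h => e12 h.symm
      have f2 : e3 ≠ e2 := fun h => e12 (by rw [← h, e13])
      have f4 : e4 ≠ e2 := fun h => e12 (by rw [← h, e14])
      rw [if_neg f1, if_neg f2, if_neg f4] at g2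
      have k3 := z (x := b + c) h2 (by simpa using g2)
      have c0 : c = 0 := by linarith
      have d0 : b = 0 := by linarith
      subst c0 d0
      rw [if_neg e12, if_pos e13, if_pos e14] at g1
      rcases hD with ⟨hD, rfl⟩ | ⟨hD, rfl⟩
      · norm_num at g1
        exact (t1 h4 h1 h3 c41 (by simp; linear_combination g1)).elim
      · norm_num at g1
        exact (n14 (x := 1) (y := 1) le_rfl (by simpa using g1)).elim
    · rw [if_neg e12, if_neg e13, if_pos e14] at g1
      exact (n14 (x := 1 + b) (y := d + 1) (by linarith) (by simpa using g1)).elim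
  · have f14 : e1 ≠ e4 := fun h => e14 h.symm
    by_cases e12 : e2 = e1 <;> by_cases e13 : e3 = e1
    · have f2 : e2 ≠ e4 := fun h => e14 (by rw [← h, e12])
      have f3 : e3 ≠ e4 := fun h => e14 (by rw [← h, e13])
      rw [if_neg f14, if_neg f2, if_neg f3] at g4
      have := z (x := d + 1) h4 (by simpa using g4)
      linarith
    · rw [if_pos e12, if_neg e13, if_neg e14] at g1
      have := (lin_indep c12.ne' (x := 1 + b) (y := b + c) (by simpa using g1)).1
      linarith
    · have f3 : e3 ≠ e4 := fun h => e14 (by rw [← h, e13])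
      have f2 : e1 ≠ e2 := fun h => e12 h.symm
      have f32 : e3 ≠ e2 := fun h => e12 (by rw [← h, e13])
      by_cases e24 : e2 = e4
      · rw [if_neg f14, if_pos e24, if_neg f3] at g4
        rw [if_neg e12, if_pos e13, if_neg e14] at g1
        have opp : ∀ {x y : ℝ} {T T' : ℂ}, ‖T‖ = 1 → ‖T'‖ = 1 → 1 ≤ x → 0 ≤ y → x • T + y • T' = 0 → T' = -T := by
          intro x y T T' a1 a2 hx hy h
          have hn : ‖x • T‖ = ‖y • T'‖ := by
            rw [eq_neg_of_add_eq_zero_left h, norm_neg]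
          rw [norm_smul, norm_smul, a1, a2, Real.norm_of_nonneg hy, Real.norm_of_nonneg (by linarith)] at hn
          have : x = y := by linarith
          subst this
          rw [← smul_add] at h
          rcases smul_eq_zero.1 h with h | h
          · linarith
          · linear_combination h
        have o1 := opp h1 h3 (x := 1 + b) (y := c + d) (by linarith) (by linarith) (by simpa using g1)
        have o2 := opp h4 h2 (x := d + 1) (y := b + c) (by linarith) (by linarith) (by
          rw [add_comm]; simpa using g4)
        exact para p2 p3 q1 q2 q3 q4 c12 c23 (by rw [← he1, ← he3, e13]) (by rw [← he2, ← he4, e24]) o1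
          (by rw [o2, neg_neg])
      · rw [if_neg f14, if_neg e24, if_neg f3] at g4
        have := z (x := d + 1) h4 (by simpa using g4)
        linarith
    · rw [if_neg e12, if_neg e13, if_neg e14] at g1
      have := z (x := 1 + b) h1 (by simpa using g1)
      linarith


open Real in
lemma loc_cone {R φ1 φ2 l1 l2 : ℝ} (hs : 0 < sin (φ2 - φ1)) (hl1 : 0 < l1) (hl2 : 0 < l2)
    {Ω : Set ℂ} (hc : Convex ℝ Ω) (T1 T2 : ℂ) (hT1 : T1 = ⟨-cos φ1, sin φ1⟩)
    (hT2 : T2 = ⟨-cos φ2, sin φ2⟩) (hV : (R:ℂ) ∈ Ω) (hV1 : (R:ℂ) + l1 • T1 ∈ Ω)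
    (hV2 : (R:ℂ) + l2 • T2 ∈ Ω) :
    ∃ ε0 > 0, ∀ x ∈ ball (R:ℂ) ε0, 0 ≤ cr T2 (x - R) → cr T1 (x - R) ≤ 0 → x ∈ Ω := by
  refine ⟨sin (φ2 - φ1) * min l1 l2 / 4, by positivity, fun x hx h2 h1 => ?_⟩
  set s := sin (φ2 - φ1) with hsd
  have hsd' : s = sin φ2 * cos φ1 - cos φ2 * sin φ1 := by rw [hsd, sin_sub]
  rw [mem_ball, dist_eq_norm] at hx
  have hre := (Complex.abs_re_le_norm (x - R)).trans_lt hx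
  have him := (Complex.abs_im_le_norm (x - R)).trans_lt hx
  set y := x - R with hy
  set m := min l1 l2 with hm
  have hm1 : m ≤ l1 := min_le_left _ _
  have hm2 : m ≤ l2 := min_le_right _ _
  have hmp : 0 < m := lt_min hl1 hl2
  have key : ∀ φ, |cr (⟨-cos φ, sin φ⟩ : ℂ) y| ≤ s * m / 2 := by
    intro φ
    have e : cr (⟨-cos φ, sin φ⟩ : ℂ) y = -(cos φ * y.im) - sin φ * y.re := by
      simp only [cr]; ring
    rw [e]
    have a1 : |cos φ * y.im| ≤ s * m / 4 := by
      rw [abs_mul]; nlinarith [abs_cos_le_one φ, abs_nonneg y.im, abs_nonneg (cos φ)]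
    have a2 : |sin φ * y.re| ≤ s * m / 4 := by
      rw [abs_mul]; nlinarith [abs_sin_le_one φ, abs_nonneg y.re, abs_nonneg (sin φ)]
    rw [abs_le] at *
    constructor <;> linarith [a1.1, a1.2, a2.1, a2.2]
  set a := cr T2 y / s with ha
  set b := -cr T1 y / s with hb
  have ha0 : 0 ≤ a := div_nonneg h2 hs.le
  have hb0 : 0 ≤ b := div_nonneg (by linarith) hs.le
  have ha1 : a ≤ m / 2 := by
    rw [ha, div_le_iff₀ hs]; have := (abs_le.1 (key φ2)).2; rw [← hT2] at this; linarith
  have hb1 : b ≤ m / 2 := by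
    rw [hb, div_le_iff₀ hs]; have := (abs_le.1 (key φ1)).1; rw [← hT1] at this; linarith
  have hyab : y = a • T1 + b • T2 := by
    apply Complex.ext
    · simp only [Complex.add_re, Complex.smul_re, smul_eq_mul, ha, hb]
      field_simp
      simp only [cr, hT1, hT2, hsd']; ring
    · simp only [Complex.add_im, Complex.smul_im, smul_eq_mul, ha, hb]
      field_simp
      simp only [cr, hT1, hT2, hsd']; ring
  have hal : a / l1 ≤ 1/2 := by rw [div_le_iff₀ hl1]; linarith
  have hbl : b / l2 ≤ 1/2 := by rw [div_le_iff₀ hl2]; linarith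
  have := hc.sum_mem (t := Finset.univ) (w := ![1 - a/l1 - b/l2, a/l1, b/l2])
    (z := ![(R:ℂ), (R:ℂ) + l1 • T1, (R:ℂ) + l2 • T2]) (by
      intro i _; fin_cases i
      · simp; linarith
      · simp; positivity
      · simp; positivity) (by simp [Fin.sum_univ_three]; ring) (by
      intro i _; fin_cases i
      · exact hV
      · exact hV1
      · exact hV2)
  convert this using 1
  have hx' : x = R + y := by rw [hy]; ring
  rw [hx', hyab]
  simp only [Fin.sum_univ_three, Matrix.cons_val, Complex.real_smul]
  push_cast
  have : (l1:ℂ) ≠ 0 := by exact_mod_cast hl1.ne'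
  have : (l2:ℂ) ≠ 0 := by exact_mod_cast hl2.ne'
  field_simp
  ring

open Real Filter Topology in
lemma loc_theta {R φ : ℝ} (hR : 0 < R) (hφ : φ ∈ Ioo (-(π/2)) (π/2)) :
    ∃ t : ℝ → ℝ, Tendsto t (𝓝[<] R) (𝓝 0) ∧ ∀ᶠ ρ in 𝓝[<] R, 
      ρ * sin (t ρ + φ) = R * sin φ ∧ t ρ + φ ∈ Icc (-(π/2)) (π/2) ∧
      ρ * cos (t ρ + φ) = √(ρ^2 - (R * sin φ)^2) := by
  have hcos : 0 < cos φ := cos_pos_of_mem_Ioo hφ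
  refine ⟨fun ρ => arcsin (R / ρ * sin φ) - φ, ?_, ?_⟩
  · have : ContinuousAt (fun ρ => arcsin (R / ρ * sin φ) - φ) R := by
      apply ContinuousAt.sub _ continuousAt_const
      apply continuous_arcsin.continuousAt.comp
      exact (continuousAt_const.div continuousAt_id hR.ne').mul continuousAt_const
    have h := this.tendsto.mono_left (nhdsWithin_le_nhds (s := Iio R))
    simpa [div_self hR.ne', arcsin_sin hφ.1.le hφ.2.le] using h
  · have c : ContinuousAt (fun ρ => |R / ρ * sin φ|) R := 
      ((continuousAt_const.div continuousAt_id hR.ne').mul continuousAt_const).abs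
    have c1 : |R / R * sin φ| < 1 := by
      rw [div_self hR.ne', one_mul, abs_lt]
      constructor <;> nlinarith [sin_sq_add_cos_sq φ]
    have ev := nhdsWithin_le_nhds (s := Iio R) (c.eventually (gt_mem_nhds c1))
    have ev2 := nhdsWithin_le_nhds (s := Iio R) (lt_mem_nhds hR)
    filter_upwards [ev, ev2] with ρ h1 h2
    have h1' := abs_lt.1 h1
    have hs : ρ * sin (arcsin (R / ρ * sin φ)) = R * sin φ := by
      rw [sin_arcsin h1'.1.le h1'.2.le]; field_simp
    simp only [sub_add_cancel]
    refine ⟨hs, arcsin_mem_Icc _, ?_⟩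
    rw [← hs, ← Real.sqrt_sq (mul_nonneg h2.le (cos_arcsin_nonneg _))]
    congr 1
    nlinarith [sin_sq_add_cos_sq (arcsin (R / ρ * sin φ))]

open Real Filter Topology in
lemma loc_real {R φ1 φ2 l1 l2 : ℝ} (hR : 0 < R) (hφ1 : φ1 ∈ Ioo (-(π/2)) (π/2))
    (hφ2 : φ2 ∈ Ioo (-(π/2)) (π/2)) (h12 : φ1 < φ2) (hl1 : 0 < l1) (hl2 : 0 < l2)
    {Ω : Set ℂ} (hc : Convex ℝ Ω) (T1 T2 : ℂ) (hT1 : T1 = ⟨-cos φ1, sin φ1⟩)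
    (hT2 : T2 = ⟨-cos φ2, sin φ2⟩) (hV : (R:ℂ) ∈ Ω) (hV1 : (R:ℂ) + l1 • T1 ∈ Ω)
    (hV2 : (R:ℂ) + l2 • T2 ∈ Ω) (hsub : ∀ x ∈ Ω, 0 ≤ cr T2 (x - R) ∧ cr T1 (x - R) ≤ 0) :
    ∃ ε0 > 0, ∀ ε, 0 < ε → ε < ε0 → ∃ K : ℂ, ∀ᶠ ρ in 𝓝[<] R,
      ρ • ∫ θ in (-π)..π, ((Ω ∩ ball (R:ℂ) ε).indicator (fun _ => (1:ℝ))
        (ρ • Complex.exp (θ * Complex.I))) • Complex.exp (θ * Complex.I) =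
      K + Complex.I * (√(ρ^2 - (cr T2 R)^2) • T2 - √(ρ^2 - (cr T1 R)^2) • T1) := by
  have hs : 0 < sin (φ2 - φ1) := sin_pos_of_pos_of_lt_pi (by linarith) (by linarith [hφ1.1, hφ2.2])
  obtain ⟨ε1, hε1, hcone⟩ := loc_cone hs hl1 hl2 hc T1 T2 hT1 hT2 hV hV1 hV2
  obtain ⟨t1, ht1, ev1⟩ := loc_theta hR hφ1
  obtain ⟨t2, ht2, ev2⟩ := loc_theta hR hφ2
  obtain ⟨η, hη0, hη⟩ : ∃ η > 0, ∀ θ, |θ| < η → θ + φ1 ∈ Icc (-(π/2)) (π/2) ∧ 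
      θ + φ2 ∈ Icc (-(π/2)) (π/2) ∧ θ ∈ Ioc (-π) π := by
    refine ⟨min (φ1 + π/2) (π/2 - φ2), lt_min (by linarith [hφ1.1]) (by linarith [hφ2.2]), ?_⟩
    intro θ h
    have h1 := abs_lt.1 (h.trans_le (min_le_left _ _))
    have h2 := abs_lt.1 (h.trans_le (min_le_right _ _))
    obtain ⟨a1, a2⟩ := hφ1
    obtain ⟨b1, b2⟩ := hφ2
    refine ⟨⟨?_, ?_⟩, ⟨?_, ?_⟩, ⟨?_, ?_⟩⟩ <;> linarith [pi_pos]
  have harg : ContinuousAt Complex.arg (R:ℂ) := 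
    Complex.continuousAt_arg (Complex.mem_slitPlane_iff.2 (Or.inl (by simpa using hR)))
  obtain ⟨ε2, hε2, hball⟩ := Metric.continuousAt_iff.1 harg η hη0
  rw [Complex.arg_ofReal_of_nonneg hR.le] at hball
  have crx : ∀ (φ ρ θ : ℝ), cr ⟨-cos φ, sin φ⟩ (ρ • Complex.exp (θ * Complex.I) - R) = 
      R * sin φ - ρ * sin (θ + φ) := by
    intro φ ρ θ
    simp only [cr, Complex.sub_re, Complex.sub_im, Complex.smul_re, Complex.smul_im,
      Complex.exp_ofReal_mul_I_re, Complex.exp_ofReal_mul_I_im, Complex.ofReal_re, Complex.ofReal_im,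
      smul_eq_mul, sin_add]
    ring
  refine ⟨min ε1 ε2, lt_min hε1 hε2, fun ε hε0 hε => 
    ⟨-((R * sin φ2) • T2 - (R * sin φ1) • T1), ?_⟩⟩
  obtain ⟨hεa, hεb⟩ := lt_min_iff.1 hε
  have hRt : Tendsto (fun ρ : ℝ => |ρ - R| + R * max |t1 ρ| |t2 ρ|) (𝓝[<] R) (𝓝 0) := by
    have c1 : Tendsto (fun ρ : ℝ => |ρ - R|) (𝓝[<] R) (𝓝 0) := by
      have : ContinuousAt (fun ρ : ℝ => |ρ - R|) R := by fun_prop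
      simpa using this.tendsto.mono_left (nhdsWithin_le_nhds (s := Iio R))
    have := c1.add ((ht1.abs.max ht2.abs).const_mul R)
    simpa using this
  have ht1' := ht1.abs.eventually (gt_mem_nhds (show |(0:ℝ)| < η by simpa using hη0))
  have ht2' := ht2.abs.eventually (gt_mem_nhds (show |(0:ℝ)| < η by simpa using hη0))
  filter_upwards [ev1, ev2, ht1', ht2', hRt.eventually (gt_mem_nhds hε0), self_mem_nhdsWithin,
    nhdsWithin_le_nhds (s := Iio R) (lt_mem_nhds hR)] with ρ e1 e2 b1 b2 hn hlt hρ
  have hlt' : ρ < R := hlt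
  obtain ⟨e1a, e1b, e1c⟩ := e1
  obtain ⟨e2a, e2b, e2c⟩ := e2
  have hle : t1 ρ ≤ t2 ρ := by
    have hh : ρ * cos (t1 ρ + φ1) ≤ R * cos φ1 := by
      rw [e1c]
      apply Real.sqrt_le_iff.2 ⟨mul_nonneg hR.le (cos_pos_of_mem_Ioo hφ1).le, ?_⟩
      have z1 : (R * cos φ1)^2 = R^2 - (R * sin φ1)^2 := by
        linear_combination R^2 * sin_sq_add_cos_sq φ1
      rw [z1]
      nlinarith
    have h3 : sin (t1 ρ + φ2) ≤ sin (t2 ρ + φ2) := by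
      have x1 : ρ * sin (t1 ρ + φ2) = R * sin φ1 * cos (φ2 - φ1) + ρ * cos (t1 ρ + φ1) * sin (φ2 - φ1) := by
        rw [← e1a, show t1 ρ + φ2 = (t1 ρ + φ1) + (φ2 - φ1) by ring, sin_add (t1 ρ + φ1)]; ring
      have x2 : R * sin φ2 = R * sin φ1 * cos (φ2 - φ1) + R * cos φ1 * sin (φ2 - φ1) := by
        rw [show sin φ2 = sin (φ1 + (φ2 - φ1)) by ring_nf, sin_add φ1]; ring
      have : ρ * sin (t1 ρ + φ2) ≤ ρ * sin (t2 ρ + φ2) := by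
        rw [e2a, x1, x2]; nlinarith
      exact le_of_mul_le_mul_left this hρ
    have := (strictMonoOn_sin.le_iff_le (hη _ b1).2.1 e2b).1 h3
    linarith
  have hset : ∀ θ ∈ Ioc (-π) π, (ρ • Complex.exp (θ * Complex.I) ∈ Ω ∩ ball (R:ℂ) ε ↔ 
      θ ∈ Icc (t1 ρ) (t2 ρ)) := by
    intro θ hθ
    constructor
    · rintro ⟨hxΩ, hxb⟩
      have h := hball ((mem_ball.1 hxb).trans hεb)
      have ha : Complex.arg (ρ • Complex.exp (θ * Complex.I)) = θ := by
        rw [Complex.real_smul, Complex.arg_real_mul _ hρ, Complex.arg_exp_mul_I]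
        exact (toIocMod_eq_self _).2 (by simpa [two_mul] using hθ)
      rw [ha, Real.dist_eq, sub_zero] at h
      obtain ⟨k2, k1⟩ := hsub _ hxΩ
      rw [hT2, crx] at k2
      rw [hT1, crx] at k1
      rw [← e2a] at k2
      rw [← e1a] at k1
      have k2' : sin (θ + φ2) ≤ sin (t2 ρ + φ2) := le_of_mul_le_mul_left (by linarith) hρ
      have k1' : sin (t1 ρ + φ1) ≤ sin (θ + φ1) := le_of_mul_le_mul_left (by linarith) hρ
      have := (strictMonoOn_sin.le_iff_le (hη _ h).2.1 e2b).1 k2'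
      have := (strictMonoOn_sin.le_iff_le e1b (hη _ h).1).1 k1'
      constructor <;> linarith
    · rintro ⟨g1, g2⟩
      have hab : |θ| ≤ max |t1 ρ| |t2 ρ| := abs_le_max_abs_abs g1 g2
      have hθη : |θ| < η := hab.trans_lt (max_lt b1 b2)
      have hd : ρ • Complex.exp (θ * Complex.I) ∈ ball (R:ℂ) ε := by
        rw [mem_ball, dist_eq_norm]
        have : ρ • Complex.exp (θ * Complex.I) - R = 
          ((ρ - R : ℝ):ℂ) * Complex.exp (θ * Complex.I) + R * (Complex.exp (Complex.I * θ) - 1) := by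
          rw [Complex.real_smul, mul_comm Complex.I]; push_cast; ring
        rw [this]
        refine (norm_add_le _ _).trans_lt (lt_of_le_of_lt ?_ hn)
        rw [norm_mul, norm_mul, Complex.norm_exp_ofReal_mul_I, Complex.norm_real, Complex.norm_real,
          mul_one, Real.norm_eq_abs, Real.norm_of_nonneg hR.le]
        have := Real.norm_exp_I_mul_ofReal_sub_one_le (x := θ)
        rw [Real.norm_eq_abs] at this
        gcongr
        exact this.trans hab
      refine ⟨hcone _ (ball_subset_ball hεa.le hd) ?_ ?_, hd⟩
      · rw [hT2, crx, ← e2a]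
        have := (strictMonoOn_sin.le_iff_le (hη _ hθη).2.1 e2b).2 (by linarith)
        nlinarith
      · rw [hT1, crx, ← e1a]
        have := (strictMonoOn_sin.le_iff_le e1b (hη _ hθη).1).2 (by linarith)
        nlinarith
  have h_integral : ∫ θ in (-π)..π, ((Ω ∩ ball (R:ℂ) ε).indicator (fun _ => (1:ℝ))
        (ρ • Complex.exp (θ * Complex.I))) • Complex.exp (θ * Complex.I) = 
      ∫ θ in (t1 ρ)..(t2 ρ), Complex.exp (θ * Complex.I) := by
    rw [intervalIntegral.integral_of_le (by linarith [pi_pos]), intervalIntegral.integral_of_le hle,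
      ← integral_Icc_eq_integral_Ioc (x := t1 ρ)]
    rw [← inter_eq_right.2 (show Icc (t1 ρ) (t2 ρ) ⊆ Ioc (-π) π from ?_), 
      ← setIntegral_indicator measurableSet_Icc]
    · apply setIntegral_congr_fun measurableSet_Ioc
      intro θ hθ
      by_cases h : θ ∈ Icc (t1 ρ) (t2 ρ)
      · simp only [indicator_of_mem h, indicator_of_mem ((hset θ hθ).2 h), one_smul]
      · simp only [indicator_of_notMem h, indicator_of_notMem (fun h' => h ((hset θ hθ).1 h')), zero_smul]
    · intro θ h
      exact ⟨(hη _ b1).2.2.1.trans_le h.1, h.2.trans (hη _ b2).2.2.2⟩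
  rw [h_integral]
  have hi : ∫ θ in (t1 ρ)..(t2 ρ), Complex.exp (θ * Complex.I) = 
      -Complex.I * (Complex.exp (t2 ρ * Complex.I) - Complex.exp (t1 ρ * Complex.I)) := by
    have := integral_exp_mul_complex (a := t1 ρ) (b := t2 ρ) Complex.I_ne_zero
    simp only [mul_comm Complex.I] at this
    rw [this, div_eq_mul_inv, Complex.inv_I]; ring
  rw [hi]
  have hexp : ∀ φ t : ℝ, ρ * sin (t + φ) = R * sin φ → 
      ρ * cos (t + φ) = √(ρ^2 - (R * sin φ)^2) → 
      (ρ:ℂ) * Complex.exp (t * Complex.I) = 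
        - (⟨-cos φ, sin φ⟩ : ℂ) * (√(ρ^2 - (R * sin φ)^2) + R * sin φ * Complex.I) := by
    intro φ t h1 h2
    rw [← h2]
    have h1' : (R:ℂ) * sin φ = ρ * sin (t + φ) := by exact_mod_cast h1.symm
    rw [h1']
    have q1 : cos t = cos (t + φ) * cos φ + sin (t + φ) * sin φ := by rw [← cos_sub]; ring_nf
    have q2 : sin t = sin (t + φ) * cos φ - cos (t + φ) * sin φ := by rw [← sin_sub]; ring_nf
    apply Complex.ext
    · simp [Complex.exp_ofReal_mul_I_re, Complex.exp_ofReal_mul_I_im, -Complex.ofReal_sin, -Complex.ofReal_cos]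
      rw [q1]; ring
    · simp [Complex.exp_ofReal_mul_I_re, Complex.exp_ofReal_mul_I_im, -Complex.ofReal_sin, -Complex.ofReal_cos]
      rw [q2]; ring
  have hc1 : (cr T1 R)^2 = (R * sin φ1)^2 := by simp [cr, hT1]; ring
  have hc2 : (cr T2 R)^2 = (R * sin φ2)^2 := by simp [cr, hT2]; ring
  have x1 := hexp φ1 _ e1a e1c
  have x2 := hexp φ2 _ e2a e2c
  rw [← hT1] at x1
  rw [← hT2] at x2
  rw [hc1, hc2]
  simp only [Complex.real_smul]
  push_cast at x1 x2 ⊢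
  linear_combination (-Complex.I) * (x2 - x1) + (T2 * R * Complex.sin φ2 - T1 * R * Complex.sin φ1) * Complex.I_sq

lemma cr_mul_unit {u : ℂ} (hu : ‖u‖ = 1) (a b : ℂ) : cr (u * a) (u * b) = cr a b := by
  have h : u.re * u.re + u.im * u.im = 1 := by
    have := Complex.normSq_eq_norm_sq u
    rw [hu, Complex.normSq_apply] at this; simpa using this
  simp only [cr, Complex.mul_re, Complex.mul_im]
  linear_combination (a.re * b.im - a.im * b.re) * h

open Real in
lemma loc_angle {S : ℂ} (hS : ‖S‖ = 1) (hre : S.re < 0) :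
    ∃ φ ∈ Ioo (-(π/2)) (π/2), S = ⟨-cos φ, sin φ⟩ := by
  have h : S.re * S.re + S.im * S.im = 1 := by
    have := Complex.normSq_eq_norm_sq S
    rw [hS, Complex.normSq_apply] at this; simpa using this
  have h1 : -1 < S.im := by nlinarith
  have h2 : S.im < 1 := by nlinarith
  refine ⟨arcsin S.im, ⟨neg_pi_div_two_lt_arcsin.2 h1, arcsin_lt_pi_div_two.2 h2⟩, ?_⟩
  apply Complex.ext
  · simp only [cos_arcsin]
    rw [show 1 - S.im^2 = (-S.re)^2 by linarith, Real.sqrt_sq (by linarith)]; ring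
  · simp only [sin_arcsin h1.le h2.le]

open Real in
lemma loc_re {V T : ℂ} {R l : ℝ} (hT : ‖T‖ = 1) (hV : ‖V‖ = R) (hl : 0 < l) (h : ‖V + l • T‖ ≤ R) :
    T.re * V.re + T.im * V.im < 0 := by
  have a1 : T.re * T.re + T.im * T.im = 1 := by
    have := Complex.normSq_eq_norm_sq T
    rw [hT, Complex.normSq_apply] at this; simpa using this
  have a2 : V.re * V.re + V.im * V.im = R^2 := by
    have := Complex.normSq_eq_norm_sq V
    rw [hV, Complex.normSq_apply] at this; simpa using this
  have a3 := Complex.normSq_eq_norm_sq (V + l • T)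
  have a4 : ‖V + l • T‖^2 ≤ R^2 := pow_le_pow_left₀ (norm_nonneg _) h 2
  rw [← a3, Complex.normSq_apply] at a4
  simp only [Complex.add_re, Complex.add_im, Complex.smul_re, Complex.smul_im, smul_eq_mul] at a4
  have : 2 * (T.re * V.re + T.im * V.im) + l ≤ 0 := by
    have : l * (2 * (T.re * V.re + T.im * V.im) + l) ≤ 0 := by
      have e : l * (2 * (T.re * V.re + T.im * V.im) + l) = (V.re + l * T.re) * (V.re + l * T.re) +
          (V.im + l * T.im) * (V.im + l * T.im) - R^2 := by
        linear_combination -l^2 * a1 - a2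
      linarith
    by_contra hh
    push Not at hh
    nlinarith
  linarith

lemma loc_cr_lt {V T : ℂ} {R l : ℝ} (hT : ‖T‖ = 1) (hV : ‖V‖ = R) (hl : 0 < l)
    (h : ‖V + l • T‖ ≤ R) : (cr T V)^2 < R^2 := by
  have a0 := loc_re hT hV hl h
  have a1 : T.re * T.re + T.im * T.im = 1 := by
    have := Complex.normSq_eq_norm_sq T
    rw [hT, Complex.normSq_apply] at this; simpa using this
  have a2 : V.re * V.re + V.im * V.im = R^2 := by
    have := Complex.normSq_eq_norm_sq V
    rw [hV, Complex.normSq_apply] at this; simpa using this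
  have : (cr T V)^2 + (T.re * V.re + T.im * V.im)^2 = R^2 := by
    rw [← a2]; simp only [cr]; linear_combination (V.re * V.re + V.im * V.im) * a1
  nlinarith

open Real Filter Topology in
lemma loc {V T1 T2 : ℂ} {R l1 l2 : ℝ} (hR : 0 < R) (hVR : ‖V‖ = R) (hl1 : 0 < l1) (hl2 : 0 < l2)
    (n1 : ‖T1‖ = 1) (n2 : ‖T2‖ = 1) (b1 : ‖V + l1 • T1‖ ≤ R) (b2 : ‖V + l2 • T2‖ ≤ R)
    (hcr : 0 < cr T2 T1)
    {Ω : Set ℂ} (hc : Convex ℝ Ω) (hV : V ∈ Ω) (hV1 : V + l1 • T1 ∈ Ω)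
    (hV2 : V + l2 • T2 ∈ Ω) (hsub : ∀ x ∈ Ω, 0 ≤ cr T2 (x - V) ∧ cr T1 (x - V) ≤ 0) :
    ∃ ε0 > 0, ∀ ε, 0 < ε → ε < ε0 → ∃ K : ℂ, ∀ᶠ ρ in 𝓝[<] R,
      ρ • ∫ θ in (-π)..π, ((Ω ∩ ball V ε).indicator (fun _ => (1:ℝ))
        (ρ • Complex.exp (θ * Complex.I))) • Complex.exp (θ * Complex.I) =
      K + Complex.I * (√(ρ^2 - (cr T2 V)^2) • T2 - √(ρ^2 - (cr T1 V)^2) • T1) := by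
  have hRC : (R:ℂ) ≠ 0 := by exact_mod_cast hR.ne'
  obtain ⟨u, hu, huV⟩ : ∃ u : ℂ, ‖u‖ = 1 ∧ V = u * R := by
    refine ⟨V / R, ?_, by field_simp⟩
    rw [norm_div, hVR, Complex.norm_real, Real.norm_of_nonneg hR.le, div_self hR.ne']
  have hu0 : u ≠ 0 := by rintro rfl; simp at hu
  obtain ⟨S1, hS1⟩ : ∃ S, T1 = u * S := ⟨T1 / u, by field_simp⟩
  obtain ⟨S2, hS2⟩ : ∃ S, T2 = u * S := ⟨T2 / u, by field_simp⟩
  have m1 : ‖S1‖ = 1 := by rw [hS1, norm_mul, hu, one_mul] at n1; exact n1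
  have m2 : ‖S2‖ = 1 := by rw [hS2, norm_mul, hu, one_mul] at n2; exact n2
  have vadd : ∀ (l : ℝ) (S : ℂ), V + l • (u * S) = u * (R + l • S) := by
    intro l S; rw [huV, Complex.real_smul, Complex.real_smul]; ring
  have re_neg : ∀ (l : ℝ) (S : ℂ), 0 < l → ‖S‖ = 1 → ‖V + l • (u * S)‖ ≤ R → S.re < 0 := by
    intro l S hl hS h
    rw [vadd, norm_mul, hu, one_mul] at h
    have := loc_re hS (V := (R:ℂ)) (by rw [Complex.norm_real, Real.norm_of_nonneg hR.le]) hl h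
    simp at this
    nlinarith
  obtain ⟨φ1, hφ1, e1⟩ := loc_angle m1 (re_neg l1 S1 hl1 m1 (hS1 ▸ b1))
  obtain ⟨φ2, hφ2, e2⟩ := loc_angle m2 (re_neg l2 S2 hl2 m2 (hS2 ▸ b2))
  have h12 : φ1 < φ2 := by
    rw [hS1, hS2, cr_mul_unit hu, e1, e2] at hcr
    have : 0 < sin (φ2 - φ1) := by rw [sin_sub]; simp only [cr] at hcr; linarith
    by_contra hh
    push Not at hh
    have := sin_nonpos_of_nonpos_of_neg_pi_le (x := φ2 - φ1) (by linarith) (by linarith [hφ1.2, hφ2.1])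
    linarith
  set Ω' : Set ℂ := (fun y => u * y) ⁻¹' Ω with hΩ'
  have hc' : Convex ℝ Ω' := hc.linear_preimage (LinearMap.mulLeft ℝ u)
  obtain ⟨ε0, hε0, H⟩ := loc_real hR hφ1 hφ2 h12 hl1 hl2 hc' S1 S2 e1 e2 
    (by rw [hΩ', mem_preimage, ← huV]; exact hV)
    (by rw [hΩ', mem_preimage, ← vadd, ← hS1]; exact hV1)
    (by rw [hΩ', mem_preimage, ← vadd, ← hS2]; exact hV2)
    (by
      intro x hx
      have := hsub _ hx
      rwa [huV, ← mul_sub, hS1, hS2, cr_mul_unit hu, cr_mul_unit hu] at this)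
  refine ⟨ε0, hε0, fun ε h1 h2 => ?_⟩
  obtain ⟨K, hK⟩ := H ε h1 h2
  refine ⟨u * K, hK.mono fun ρ h => ?_⟩
  have hmem : ∀ y, y ∈ Ω' ∩ ball (R:ℂ) ε ↔ u * y ∈ Ω ∩ ball V ε := by
    intro y
    rw [huV, mem_inter_iff, mem_inter_iff, mem_ball, mem_ball, dist_eq_norm, dist_eq_norm, ← mul_sub, 
      norm_mul, hu, one_mul]; rfl
  obtain ⟨ψ, hψ⟩ : ∃ ψ : ℝ, Complex.exp (ψ * Complex.I) = u := by
    refine ⟨Complex.arg u, ?_⟩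
    have := Complex.norm_mul_exp_arg_mul_I u
    rw [hu] at this; simpa using this
  set F : ℝ → ℂ := fun θ => ((Ω ∩ ball V ε).indicator (fun _ => (1:ℝ))
        (ρ • Complex.exp (θ * Complex.I))) • Complex.exp (θ * Complex.I) with hF
  have hper : Function.Periodic F (2 * π) := by
    intro θ
    have : Complex.exp (((θ + 2 * π : ℝ) : ℂ) * Complex.I) = Complex.exp (θ * Complex.I) := by
      push_cast
      rw [add_mul, Complex.exp_add, Complex.exp_two_pi_mul_I, mul_one]
    simp only [hF, this]
  have hFs : ∀ θ : ℝ, F (θ + ψ) = u * (((Ω' ∩ ball (R:ℂ) ε).indicator (fun _ => (1:ℝ))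
        (ρ • Complex.exp (θ * Complex.I))) • Complex.exp (θ * Complex.I)) := by
    intro θ
    have e : Complex.exp (((θ + ψ : ℝ) : ℂ) * Complex.I) = u * Complex.exp (θ * Complex.I) := by
      push_cast
      rw [add_mul, Complex.exp_add, hψ, mul_comm]
    simp only [hF, e]
    rw [← mul_smul_comm, show ρ • (u * Complex.exp (θ * Complex.I)) =
      u * (ρ • Complex.exp (θ * Complex.I)) from (mul_smul_comm _ _ _).symm]
    congr 2
    by_cases hh : ρ • Complex.exp (θ * Complex.I) ∈ Ω' ∩ ball (R:ℂ) ε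
    · rw [indicator_of_mem hh, indicator_of_mem ((hmem _).1 hh)]
    · rw [indicator_of_notMem hh, indicator_of_notMem (fun h' => hh ((hmem _).2 h'))]
  have hI : ∫ θ in (-π)..π, F θ = u * ∫ θ in (-π)..π, ((Ω' ∩ ball (R:ℂ) ε).indicator (fun _ => (1:ℝ))
        (ρ • Complex.exp (θ * Complex.I))) • Complex.exp (θ * Complex.I) := by
    rw [← intervalIntegral.integral_const_mul]
    simp only [← hFs]
    rw [intervalIntegral.integral_comp_add_right F ψ]
    have := hper.intervalIntegral_add_eq (-π) (-π + ψ)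
    rw [show -π + 2 * π = π by ring, show -π + ψ + 2 * π = π + ψ by ring] at this
    exact this
  rw [hI, ← mul_smul_comm, h]
  have q1 : cr T1 V = cr S1 R := by rw [hS1, huV, cr_mul_unit hu]
  have q2 : cr T2 V = cr S2 R := by rw [hS2, huV, cr_mul_unit hu]
  rw [q1, q2, hS1, hS2]
  simp only [Complex.real_smul]
  ring


instance instMSCircle : MeasurableSpace Circle := borel Circle
instance instBSCircle : BorelSpace Circle := ⟨rfl⟩
instance instFactTwoPi : Fact (0 < 2 * Real.pi) := ⟨by positivity⟩

open Real in
lemma circle_measure : ∃ c : NNReal, c ≠ 0 ∧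
    Measure.map (AddCircle.homeomorphCircle'.symm) (μH[1] : Measure Circle) =
      c • (volume : Measure (AddCircle (2 * π))) := by
  have : IsIsometricSMul Circle Circle := ⟨fun c => Isometry.of_dist_eq fun x y => by
    change dist (((c * x : Circle)) : ℂ) ((c * y : Circle) : ℂ) = dist (x:ℂ) (y:ℂ)
    rw [Circle.coe_mul, Circle.coe_mul, dist_eq_norm, dist_eq_norm, ← mul_sub, norm_mul]; exact (congrArg (fun t => t * _) (Circle.norm_coe c)).trans (one_mul _)⟩
  have hiso : Isometry (fun z : Circle => (z : ℂ)) := isometry_subtype_coe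
  have hfin : (μH[1] : Measure Circle) univ < ⊤ := by
    have hl : LipschitzWith 1 (fun x : ℝ => Circle.exp x) := by
      refine LipschitzWith.of_dist_le_mul fun x y => ?_
      change dist ((Circle.exp x : Circle) : ℂ) ((Circle.exp y : Circle) : ℂ) ≤ _
      rw [Circle.coe_exp, Circle.coe_exp]
      have := (lipschitzWith_of_nnnorm_deriv_le (C := 1) (f := fun x : ℝ => Complex.exp (x * Complex.I)) (by fun_prop) (by
        intro x
        have : HasDerivAt (fun x : ℝ => Complex.exp (x * Complex.I)) (Complex.exp (x * Complex.I) * (1 * Complex.I)) x :=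
          ((Complex.ofRealCLM.hasDerivAt (x := x)).mul_const Complex.I).cexp
        rw [this.deriv]
        rw [← NNReal.coe_le_coe]
        simp [Complex.norm_exp_ofReal_mul_I])).dist_le_mul x y
      simpa using this
    have h1 := hl.hausdorffMeasure_image_le (d := 1) zero_le_one (Icc (-π) π)
    have h2 : (fun x : ℝ => Circle.exp x) '' Icc (-π) π = univ := by
      refine eq_univ_of_forall fun z => ⟨Complex.arg z, ⟨(Complex.neg_pi_lt_arg _).le, Complex.arg_le_pi _⟩, Circle.exp_arg z⟩
    rw [h2, hausdorffMeasure_real] at h1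
    refine h1.trans_lt ?_
    simp
  have hpos : (μH[1] : Measure Circle) univ ≠ 0 := by
    have hl : LipschitzWith 1 (fun z : Circle => (z:ℂ).re) := by
      refine LipschitzWith.of_dist_le_mul fun x y => ?_
      change _ ≤ _ * dist (x:ℂ) (y:ℂ)
      rw [dist_eq_norm, dist_eq_norm, NNReal.coe_one, one_mul]
      exact Complex.abs_re_le_norm ((x:ℂ) - (y:ℂ))
    have h1 := hl.hausdorffMeasure_image_le (d := 1) zero_le_one univ
    intro h0
    rw [h0, hausdorffMeasure_real] at h1
    have h2 : Icc (-1:ℝ) 1 ⊆ (fun z : Circle => (z:ℂ).re) '' univ := by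
      intro x hx
      refine ⟨Circle.exp (arccos x), mem_univ _, ?_⟩
      simp only [Circle.coe_exp, Complex.exp_ofReal_mul_I_re]
      exact Real.cos_arccos hx.1 hx.2
    have h3 := (measure_mono h2).trans h1
    simp at h3
    norm_num at h3
  have : IsFiniteMeasure (μH[1] : Measure Circle) := ⟨hfin⟩
  set e := AddCircle.homeomorphCircle' with he
  have hmul : ∀ a b, e.symm (a * b) = e.symm a + e.symm b := by
    intro a b
    apply e.injective
    rw [e.apply_symm_apply]
    have h1 : ∀ x y : AddCircle (2 * π), e (x + y) = e x * e y := fun x y => Real.Angle.toCircle_add x y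
    rw [h1, e.apply_symm_apply, e.apply_symm_apply]
  have hmeas : Measurable e.symm := e.symm.continuous.measurable
  have : Measure.IsAddLeftInvariant (Measure.map e.symm (μH[1] : Measure Circle)) := by
    constructor
    intro g
    rw [Measure.map_map (measurable_const_add g) hmeas]
    have : (fun x => g + x) ∘ e.symm = e.symm ∘ (fun z => e g * z) := by
      ext z
      simp [hmul]
    rw [this, ← Measure.map_map hmeas (measurable_const_mul _), map_mul_left_eq_self]
  have : IsFiniteMeasure (Measure.map e.symm (μH[1] : Measure Circle)) :=
    Measure.isFiniteMeasure_map _ _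
  have := Measure.isAddInvariant_eq_smul_of_compactSpace (Measure.map e.symm (μH[1] : Measure Circle)) (volume : Measure (AddCircle (2 * π)))
  refine ⟨_, ?_, this⟩
  intro h0
  rw [h0, zero_smul] at this
  apply hpos
  have h5 := congrArg (fun m => m univ) this
  simpa [Measure.map_apply hmeas MeasurableSet.univ] using h5

open Real in
lemma sphere_integral (f : EuclideanSpace ℝ (Fin 2) → EuclideanSpace ℝ (Fin 2))
    (h : ∫ v in sphere (0 : EuclideanSpace ℝ (Fin 2)) 1, f v ∂μH[1] = 0) :
    ∫ θ in (-π)..π, f (Complex.orthonormalBasisOneI.repr (Complex.exp (θ * Complex.I))) = 0 := by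
  obtain ⟨c, hc, hm⟩ := circle_measure
  set L := Complex.orthonormalBasisOneI.repr
  have hiso : Isometry (fun z : Circle => L (z : ℂ)) := L.isometry.comp isometry_subtype_coe
  have hr : range (fun z : Circle => L (z : ℂ)) = sphere 0 1 := by
    ext v
    constructor
    · rintro ⟨z, rfl⟩
      simp only [mem_sphere_iff_norm, sub_zero, LinearIsometryEquiv.norm_map]
      exact Circle.norm_coe z
    · intro hv
      refine ⟨⟨L.symm v, ?_⟩, ?_⟩
      · simpa [Submonoid.unitSphere] using hv
      · simp
  have hemb : MeasurableEmbedding (fun z : Circle => L (z : ℂ)) := hiso.isClosedEmbedding.measurableEmbedding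
  rw [← hr, ← hiso.map_hausdorffMeasure (Or.inl zero_le_one), hemb.integral_map] at h
  set e := AddCircle.homeomorphCircle' with he
  have h2 : ∫ z : Circle, f (L z) ∂μH[1] = ∫ t, f (L (e t)) ∂(Measure.map e.symm (μH[1] : Measure Circle)) := by
    rw [e.symm.measurableEmbedding.integral_map]
    simp
  rw [h2, hm] at h
  have h3 : (c:ℝ) • ∫ t : AddCircle (2 * π), f (L (e t)) = 0 := by
    rw [← h, integral_smul_nnreal_measure]; rfl
  have h4 := (smul_eq_zero.1 h3).resolve_left (by simpa using hc)
  rw [← AddCircle.intervalIntegral_preimage (2 * π) (-π)] at h4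
  rw [show -π + 2 * π = π by ring] at h4
  convert h4 using 5 with x
  rw [he, AddCircle.homeomorphCircle'_apply_mk, Circle.coe_exp]


lemma far_pt (P : Fin 4 → ℂ) {R : ℝ} (hR : 0 < R) (hle : ∀ i, ‖P i‖ ≤ R) {x : ℂ}
    (hx : x ∈ convexHull ℝ (range P)) (hxR : ‖x‖ = R) : ∃ i, P i = x := by
  have hsub : convexHull ℝ (range P) ⊆ closedBall (0:ℂ) R := by
    apply convexHull_min _ (convex_closedBall _ _)
    rintro _ ⟨i, rfl⟩
    simpa using hle i
  have h1 : x ∈ extremePoints ℝ (closedBall (0:ℂ) R) := by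
    rw [StrictConvexSpace.extremePoints_closedBall_eq_sphere]
    simpa using hxR
  have h2 := inter_extremePoints_subset_extremePoints_of_subset hsub ⟨hx, h1⟩
  have h3 : x ∈ range P := extremePoints_convexHull_subset h2
  exact h3

lemma hull_compact (P : Fin 4 → ℂ) : IsCompact (convexHull ℝ (range P)) :=
  (finite_range P).isCompact_convexHull ℝ

open Filter Topology in
lemma far_cover (P : Fin 4 → ℂ) {R : ℝ} (hR : 0 < R) (hle : ∀ i, ‖P i‖ ≤ R) {ε : ℝ} (hε : 0 < ε) :
    ∀ᶠ ρ in 𝓝[<] R, ∀ x ∈ convexHull ℝ (range P), ‖x‖ = ρ → ∃ i, ‖P i‖ = R ∧ x ∈ ball (P i) ε := by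
  set S : Set ℂ := convexHull ℝ (range P) \ ⋃ i ∈ {i | ‖P i‖ = R}, ball (P i) ε with hS
  have hSc : IsCompact S := (hull_compact P).diff (isOpen_biUnion fun _ _ => isOpen_ball)
  have hlt : ∀ x ∈ S, ‖x‖ < R := by
    intro x hx
    have h1 : ‖x‖ ≤ R := by
      have hsub : convexHull ℝ (range P) ⊆ closedBall (0:ℂ) R := by
        apply convexHull_min _ (convex_closedBall _ _)
        rintro _ ⟨i, rfl⟩
        simpa using hle i
      simpa using hsub hx.1
    refine lt_of_le_of_ne h1 fun h => hx.2 ?_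
    obtain ⟨i, hi⟩ := far_pt P hR hle hx.1 h
    exact mem_biUnion (x := i) (by rw [Set.mem_ofPred_eq, hi, h]) (by rw [hi]; exact mem_ball_self hε)
  obtain ⟨m, hm, hmS⟩ : ∃ m < R, ∀ x ∈ S, ‖x‖ ≤ m := by
    rcases S.eq_empty_or_nonempty with h | h
    · exact ⟨R - 1, by linarith, by simp [h]⟩
    · obtain ⟨y, hy, hy'⟩ := hSc.exists_isMaxOn h continuous_norm.continuousOn
      exact ⟨‖y‖, hlt y hy, fun x hx => hy' hx⟩
  filter_upwards [Ioo_mem_nhdsLT hm] with ρ hρ x hx hxρ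
  by_contra hcon
  push Not at hcon
  have : x ∈ S := by
    refine ⟨hx, ?_⟩
    intro h
    obtain ⟨i, hi, hxi⟩ := mem_iUnion₂.1 h
    exact hcon i hi hxi
  have := hmS x this
  linarith [hρ.1]

lemma ind_integrable {S : Set ℂ} (hS : MeasurableSet S) (ρ a b : ℝ) :
    IntervalIntegrable (fun θ : ℝ => (S.indicator (fun _ => (1:ℝ))
        (ρ • Complex.exp (θ * Complex.I))) • Complex.exp (θ * Complex.I)) volume a b := by
  have hc : Continuous (fun θ : ℝ => Complex.exp (θ * Complex.I)) := by fun_prop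
  have hm : Measurable (fun θ : ℝ => S.indicator (fun _ => (1:ℝ)) (ρ • Complex.exp (θ * Complex.I))) :=
    (measurable_const.indicator hS).comp (hc.const_smul ρ).measurable
  have hm2 := (hm.smul hc.measurable).aestronglyMeasurable (μ := volume)
  refine (intervalIntegrable_const (c := (1:ℝ)) (a := a) (b := b) (μ := volume)).mono_fun hm2.restrict ?_
  filter_upwards with θ
  change ‖S.indicator (fun _ => (1:ℝ)) (ρ • Complex.exp (θ * Complex.I)) • Complex.exp (θ * Complex.I)‖ ≤ _
  rw [norm_smul, Complex.norm_exp_ofReal_mul_I, mul_one]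
  by_cases h : ρ • Complex.exp (θ * Complex.I) ∈ S
  · rw [indicator_of_mem h]
  · rw [indicator_of_notMem h]; simp

lemma cr_sq_le {T V : ℂ} (hT : ‖T‖ = 1) : (cr T V)^2 ≤ ‖V‖^2 := by
  have a1 := unit_re_im hT
  have a2 := norm_re_im (T := V) rfl
  have : (cr T V)^2 + (T.re * V.re + T.im * V.im)^2 = ‖V‖^2 := by
    rw [← a2]; simp only [cr]; linear_combination (V.re^2 + V.im^2) * a1
  nlinarith [sq_nonneg (T.re * V.re + T.im * V.im)]

open Real Filter Topology in
lemma assembly0 (P T : Fin 4 → ℂ) (l : Fin 4 → ℝ) (hT : ∀ i, ‖T i‖ = 1) (hl : ∀ i, 0 < l i)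
    (hP : ∀ i, P (i+1) = P i + l i • T i) (hTT : ∀ i, 0 < cr (T i) (T (i+1)))
    (hinj : Function.Injective P)
    (hside : ∀ i, ∀ x ∈ convexHull ℝ (range P), 0 ≤ cr (T i) (x - P i))
    (R : ℝ) (hR : 0 < R) (hle : ∀ i, ‖P i‖ ≤ R) (a : Fin 4 → ℝ)
    (ha : ∀ i, (‖P i‖ = R ∧ a i = 1) ∨ (‖P i‖ < R ∧ a i = 0))
    (hbal : ∀ᵐ r ∂(volume.restrict (Ici (0:ℝ))), ∫ θ in (-π)..π,
      ((convexHull ℝ (range P)).indicator (fun _ => (1:ℝ)) (r • Complex.exp (θ * Complex.I))) •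
        Complex.exp (θ * Complex.I) = 0) (i : Fin 4) :
    ∑ j, (if (cr (T j) (P j))^2 = (cr (T i) (P i))^2 then (a j + a (j+1)) • T j else 0) = 0 := by
  set Ω := convexHull ℝ (range P) with hΩ
  have hPΩ : ∀ i, P i ∈ Ω := fun i => subset_convexHull ℝ _ ⟨i, rfl⟩
  have h4 : ∀ i : Fin 4, i + 3 + 1 = i := by decide
  have hP' : ∀ i, P i = P (i+3) + l (i+3) • T (i+3) := by
    intro i; have := hP (i+3); rwa [h4] at this
  have crP : ∀ i, cr (T i) (P (i+1)) = cr (T i) (P i) := by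
    intro i; rw [hP]; simp [cr]; ring
  have crP' : ∀ i, cr (T (i+3)) (P i) = cr (T (i+3)) (P (i+3)) := by
    intro i; have := crP (i+3); rwa [h4] at this
  have hback : ∀ i, P i + l (i+3) • (-T (i+3)) = P (i+3) := by
    intro i; conv_lhs => rw [hP' i]
    simp
  have hloc : ∀ i, ∃ ε0 > 0, ‖P i‖ = R → ∀ ε, 0 < ε → ε < ε0 → ∃ K : ℂ, ∀ᶠ ρ in 𝓝[<] R,
      ρ • ∫ θ in (-π)..π, ((Ω ∩ ball (P i) ε).indicator (fun _ => (1:ℝ))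
        (ρ • Complex.exp (θ * Complex.I))) • Complex.exp (θ * Complex.I) =
      K + Complex.I * (√(ρ^2 - (cr (T i) (P i))^2) • T i + 
        √(ρ^2 - (cr (T (i+3)) (P (i+3)))^2) • T (i+3)) := by
    intro i
    by_cases hi : ‖P i‖ = R
    · obtain ⟨ε0, h0, H⟩ := loc (V := P i) (T1 := -T (i+3)) (T2 := T i) hR hi (hl (i+3)) (hl i)
        (by rw [norm_neg]; exact hT _) (hT i) (by rw [hback]; exact hle _) (by rw [← hP]; exact hle _)
        (by have := hTT (i+3); rw [h4] at this; simp only [cr, Complex.neg_re, Complex.neg_im] at this ⊢; linarith)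
        (convex_convexHull ℝ (range P)) (hPΩ i) (by rw [hback]; exact hPΩ _) (by rw [← hP]; exact hPΩ _)
        (by
          intro x hx
          refine ⟨hside i x hx, ?_⟩
          have h1 := hside (i+3) x hx
          have h2 := crP' i
          simp only [cr, Complex.neg_re, Complex.neg_im, Complex.sub_re, Complex.sub_im] at h1 h2 ⊢
          linarith)
      refine ⟨ε0, h0, fun _ ε h1 h2 => ?_⟩
      obtain ⟨K, hK⟩ := H ε h1 h2
      refine ⟨K, hK.mono fun ρ h => ?_⟩
      rw [h]
      have : (cr (-T (i+3)) (P i))^2 = (cr (T (i+3)) (P (i+3)))^2 := by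
        rw [← crP' i]; simp only [cr, Complex.neg_re, Complex.neg_im]; ring
      rw [this, smul_neg, sub_neg_eq_add]
    · exact ⟨1, one_pos, fun h => absurd h hi⟩
  choose ε0 hε0 hloc using hloc
  obtain ⟨ε, hε, hεlt, hεd⟩ : ∃ ε > 0, (∀ i, ε < ε0 i) ∧ ∀ i j, i ≠ j → 2 * ε < dist (P i) (P j) := by
    have e1 : ∀ᶠ ε in 𝓝[>] (0:ℝ), ∀ i, ε < ε0 i := 
      eventually_all.2 fun i => nhdsWithin_le_nhds (gt_mem_nhds (hε0 i))
    have e2 : ∀ᶠ ε in 𝓝[>] (0:ℝ), ∀ i j, i ≠ j → 2 * ε < dist (P i) (P j) := by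
      refine eventually_all.2 fun i => eventually_all.2 fun j => ?_
      by_cases h : i = j
      · simp [h]
      · have : 0 < dist (P i) (P j) / 2 := by
          have := dist_pos.2 (fun h' => h (hinj h'))
          positivity
        filter_upwards [nhdsWithin_le_nhds (gt_mem_nhds this)] with ε hε _
        linarith
    obtain ⟨ε, h⟩ := (e1.and (e2.and self_mem_nhdsWithin)).exists
    exact ⟨ε, h.2.2, h.1, h.2.1⟩
  have hK : ∀ i, ∃ K : ℂ, ‖P i‖ = R → ∀ᶠ ρ in 𝓝[<] R,
      ρ • ∫ θ in (-π)..π, ((Ω ∩ ball (P i) ε).indicator (fun _ => (1:ℝ))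
        (ρ • Complex.exp (θ * Complex.I))) • Complex.exp (θ * Complex.I) =
      K + Complex.I * (√(ρ^2 - (cr (T i) (P i))^2) • T i + 
        √(ρ^2 - (cr (T (i+3)) (P (i+3)))^2) • T (i+3)) := by
    intro i
    by_cases hi : ‖P i‖ = R
    · obtain ⟨K, hK⟩ := hloc i hi ε hε (hεlt i)
      exact ⟨K, fun _ => hK⟩
    · exact ⟨0, fun h => absurd h hi⟩
  choose K hK using hK
  have hK' : ∀ i, ∀ᶠ ρ in 𝓝[<] R,
      a i • ρ • ∫ θ in (-π)..π, ((Ω ∩ ball (P i) ε).indicator (fun _ => (1:ℝ))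
        (ρ • Complex.exp (θ * Complex.I))) • Complex.exp (θ * Complex.I) =
      a i • (K i + Complex.I * (√(ρ^2 - (cr (T i) (P i))^2) • T i + 
        √(ρ^2 - (cr (T (i+3)) (P (i+3)))^2) • T (i+3))) := by
    intro i
    rcases ha i with h | h
    · exact (hK i h.1).mono fun ρ hh => by rw [hh]
    · simp [h.2]
  have htot : ∀ᶠ ρ in 𝓝[<] R, ρ • ∫ θ in (-π)..π, (Ω.indicator (fun _ => (1:ℝ))
        (ρ • Complex.exp (θ * Complex.I))) • Complex.exp (θ * Complex.I) = 
      (∑ i, a i • K i) + Complex.I * 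
        ∑ i, √(ρ^2 - (cr (T i) (P i))^2) • ((a i + a (i+1)) • T i) := by
    filter_upwards [eventually_all.2 hK', far_cover P hR hle hε, 
      nhdsWithin_le_nhds (s := Iio R) (lt_mem_nhds hR)] with ρ h1 h2 hρ
    have hsplit : ∀ θ : ℝ, (Ω.indicator (fun _ => (1:ℝ))
        (ρ • Complex.exp (θ * Complex.I))) • Complex.exp (θ * Complex.I) = 
        ∑ i, a i • (((Ω ∩ ball (P i) ε).indicator (fun _ => (1:ℝ))
        (ρ • Complex.exp (θ * Complex.I))) • Complex.exp (θ * Complex.I)) := by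
      intro θ
      set z := ρ • Complex.exp (θ * Complex.I) with hz
      by_cases hzΩ : z ∈ Ω
      · obtain ⟨i, hi, hzi⟩ := h2 z hzΩ (by rw [hz, norm_smul, Complex.norm_exp_ofReal_mul_I, mul_one, 
          Real.norm_of_nonneg hρ.le])
        have hai : a i = 1 := by
          rcases ha i with h | h
          · exact h.2
          · exact absurd hi h.1.ne
        rw [Finset.sum_eq_single i]
        · rw [indicator_of_mem hzΩ, indicator_of_mem (show z ∈ Ω ∩ ball (P i) ε from ⟨hzΩ, hzi⟩), hai, one_smul, one_smul]
        · intro j _ hj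
          rw [indicator_of_notMem, zero_smul, smul_zero]
          rintro ⟨_, hzj⟩
          have := hεd j i hj
          have := dist_triangle_left (P j) (P i) z
          rw [mem_ball] at hzi hzj
          linarith
        · simp
      · rw [indicator_of_notMem hzΩ, zero_smul, Finset.sum_eq_zero]
        intro i _
        rw [indicator_of_notMem (fun h => hzΩ h.1), zero_smul, smul_zero]
    simp only [hsplit]
    have hmeas : MeasurableSet Ω := (hull_compact P).isClosed.measurableSet
    have hsum : ∫ θ in (-π)..π, ∑ i, a i • (((Ω ∩ ball (P i) ε).indicator (fun _ => (1:ℝ))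
        (ρ • Complex.exp (θ * Complex.I))) • Complex.exp (θ * Complex.I)) =
        ∑ i, ∫ θ in (-π)..π, a i • (((Ω ∩ ball (P i) ε).indicator (fun _ => (1:ℝ))
        (ρ • Complex.exp (θ * Complex.I))) • Complex.exp (θ * Complex.I)) :=
      intervalIntegral.integral_finsetSum
        (fun i _ => (ind_integrable (hmeas.inter measurableSet_ball) ρ _ _).smul (a i))
    rw [hsum]
    simp only [intervalIntegral.integral_smul]
    rw [Finset.smul_sum]
    simp only [smul_comm ρ (a _)]
    rw [Finset.sum_congr rfl (fun i _ => h1 i)]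
    simp only [Fin.sum_univ_four, Complex.real_smul, show (0:Fin 4)+3 = 3 from rfl, 
      show (1:Fin 4)+3 = 0 from rfl, show (2:Fin 4)+3 = 1 from rfl, show (3:Fin 4)+3 = 2 from rfl,
      show (0:Fin 4)+1 = 1 from rfl, show (1:Fin 4)+1 = 2 from rfl, show (2:Fin 4)+1 = 3 from rfl,
      show (3:Fin 4)+1 = 0 from rfl]
    push_cast
    ring
  obtain ⟨m, hm, hmR⟩ := mem_nhdsLT_iff_exists_Ioo_subset.1 (htot.and 
    (nhdsWithin_le_nhds (s := Iio R) (lt_mem_nhds hR)))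
  have hm' : m < R := hm
  set G : ℝ → ℂ := fun ρ => (∑ i, a i • K i) + Complex.I * 
        ∑ i, √(ρ^2 - (cr (T i) (P i))^2) • ((a i + a (i+1)) • T i) with hG
  have hGc : Continuous G := by
    apply continuous_const.add (continuous_const.mul _)
    apply continuous_finsetSum
    intro i _
    exact (by fun_prop : Continuous fun ρ : ℝ => √(ρ^2 - (cr (T i) (P i))^2)).smul continuous_const
  have hG0 : EqOn G (fun _ => 0) (Ioo m R) := by
    apply Measure.eqOn_open_of_ae_eq (μ := volume) _ isOpen_Ioo hGc.continuousOn continuousOn_const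
    have hb := (ae_restrict_iff' measurableSet_Ici).1 hbal
    refine (ae_restrict_iff' measurableSet_Ioo).2 ?_
    filter_upwards [hb] with ρ h1 h2
    have h3 := hmR h2
    have h4 : G ρ = _ := h3.1.symm
    rw [h4, h1 h3.2.le, smul_zero]
  have hcR : ∀ i, (cr (T i) (P i))^2 < R^2 := by
    intro i
    rcases ha i with h | h
    · exact loc_cr_lt (hT i) h.1 (hl i) (by rw [← hP]; exact hle _)
    · refine (cr_sq_le (hT i)).trans_lt ?_
      exact pow_lt_pow_left₀ h.1 (norm_nonneg _) two_ne_zero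
  obtain ⟨q, hq1, hq2, hq3⟩ : ∃ q < R^2, (∀ i, (cr (T i) (P i))^2 < q) ∧ (max m 0)^2 ≤ q := by
    have e1 : ∀ᶠ q in 𝓝[<] (R^2), ∀ i, (cr (T i) (P i))^2 < q := 
      eventually_all.2 fun i => nhdsWithin_le_nhds (lt_mem_nhds (hcR i))
    have e2 : (max m 0)^2 < R^2 := 
      pow_lt_pow_left₀ (max_lt hm' hR) (le_max_right _ _) two_ne_zero
    have e3 : ∀ᶠ q in 𝓝[<] (R^2), (max m 0)^2 < q :=
      nhdsWithin_le_nhds (s := Iio (R^2)) (lt_mem_nhds e2)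
    obtain ⟨q, h⟩ := (e1.and (e3.and self_mem_nhdsWithin)).exists
    exact ⟨q, h.2.2, h.1, h.2.1.le⟩
  refine indep (w := fun j => (a j + a (j+1)) • T j) (c := fun j => (cr (T j) (P j))^2) hq1 hq2 
    (-Complex.I * ∑ i, a i • K i) ?_ i
  intro u hu
  have hu0 : 0 ≤ u := (sq_nonneg _).trans (hq3.trans hu.1.le)
  have hmem : √u ∈ Ioo m R := by
    constructor
    · refine (le_max_left m 0).trans_lt ?_
      exact Real.lt_sqrt_of_sq_lt (hq3.trans_lt hu.1)
    · exact (Real.sqrt_lt' hR).2 hu.2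
  have := hG0 hmem
  simp only [hG, Real.sq_sqrt hu0] at this
  linear_combination (-Complex.I) * this + 
    (∑ i, √(u - (cr (T i) (P i))^2) • ((a i + a (i+1)) • T i)) * Complex.I_sq

open Real Filter Topology in
lemma assembly1 (P : Fin 4 → ℂ) (hccw : ∀ i, 0 < cr (P (i+1) - P i) (P (i+2) - P i))
    (h0 : ∀ i, ‖P i‖ ≤ ‖P 0‖)
    (hbal : ∀ᵐ r ∂(volume.restrict (Ici (0:ℝ))), ∫ θ in (-π)..π,
      ((convexHull ℝ (range P)).indicator (fun _ => (1:ℝ)) (r • Complex.exp (θ * Complex.I))) •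
        Complex.exp (θ * Complex.I) = 0) :
    P 0 + P 2 = 0 ∧ P 1 + P 3 = 0 := by
  have hR : 0 < ‖P 0‖ := by
    rw [norm_pos_iff]
    intro h
    have hz : ∀ i, P i = 0 := fun i => by
      have := h0 i; rw [h, norm_zero] at this; exact norm_le_zero_iff.1 this
    have := hccw 0
    simp [hz, cr] at this
  have hne1 : ∀ i, P (i+1) - P i ≠ 0 := fun i h => by
    have := hccw i; rw [h] at this; simp [cr] at this
  have hne2 : ∀ i, P (i+2) - P i ≠ 0 := fun i h => by
    have := hccw i; rw [h] at this; simp [cr] at this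
  set l : Fin 4 → ℝ := fun i => ‖P (i+1) - P i‖ with hl
  set T : Fin 4 → ℂ := fun i => (l i)⁻¹ • (P (i+1) - P i) with hT
  have hlp : ∀ i, 0 < l i := fun i => norm_pos_iff.2 (hne1 i)
  have hlT : ∀ i, l i • T i = P (i+1) - P i := fun i => by
    simp only [hT]; rw [smul_smul, mul_inv_cancel₀ (hlp i).ne', one_smul]
  have hT1 : ∀ i, ‖T i‖ = 1 := fun i => by
    simp only [hT]; rw [norm_smul, norm_inv, Real.norm_of_nonneg (hlp i).le]
    exact inv_mul_cancel₀ (hlp i).ne'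
  have hcs : ∀ (x : ℝ) (u v : ℂ), cr (x • u) v = x * cr u v := by
    intro x u v; simp [cr]; ring
  have hcs' : ∀ (x : ℝ) (u v : ℂ), cr u (x • v) = x * cr u v := by
    intro x u v; simp [cr]; ring
  have hP : ∀ i, P (i+1) = P i + l i • T i := fun i => by rw [hlT]; ring
  have h11 : ∀ i : Fin 4, i + 1 + 1 = i + 2 := by decide
  have hTT : ∀ i, 0 < cr (T i) (T (i+1)) := fun i => by
    simp only [hT]
    rw [hcs, hcs', h11]
    have h := hccw i
    have : cr (P (i+1) - P i) (P (i+2) - P (i+1)) = cr (P (i+1) - P i) (P (i+2) - P i) := by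
      simp [cr]; ring
    rw [this]
    have := hlp i
    have := hlp (i+1)
    positivity
  have hinj : Function.Injective P := by
    intro i j hij
    by_contra hne
    have hd : ∀ i j : Fin 4, ¬ i = j → j = i + 1 ∨ j = i + 2 ∨ i = j + 1 := by decide
    have := hd i j hne
    rcases this with h | h | h
    · exact hne1 i (by rw [← h, hij, sub_self])
    · exact hne2 i (by rw [← h, hij, sub_self])
    · exact hne1 j (by rw [← h, hij, sub_self])
  have hside : ∀ i, ∀ x ∈ convexHull ℝ (range P), 0 ≤ cr (T i) (x - P i) := by
    intro i x hx
    have hconv : Convex ℝ {x : ℂ | 0 ≤ cr (T i) (x - P i)} := by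
      intro x hx y hy s t hs ht hst
      have hx' : 0 ≤ cr (T i) (x - P i) := hx
      have hy' : 0 ≤ cr (T i) (y - P i) := hy
      change 0 ≤ cr (T i) (s • x + t • y - P i)
      have : s • x + t • y - P i = s • (x - P i) + t • (y - P i) := by
        have : P i = (s + t) • P i := by rw [hst, one_smul]
        conv_lhs => rw [this]
        module
      have e : cr (T i) (s • (x - P i) + t • (y - P i)) = s * cr (T i) (x - P i) + t * cr (T i) (y - P i) := by
        simp [cr]; ring
      rw [this, e]
      positivity
    have hsub : range P ⊆ {x : ℂ | 0 ≤ cr (T i) (x - P i)} := by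
      rintro _ ⟨j, rfl⟩
      change 0 ≤ cr (T i) (P j - P i)
      simp only [hT]
      rw [hcs]
      refine mul_nonneg (inv_nonneg.2 (hlp i).le) ?_
      have hd : ∀ i j : Fin 4, j = i ∨ j = i + 1 ∨ j = i + 2 ∨ j = i + 3 := by decide
      have := hd i j
      rcases this with h | h | h | h
      · rw [h]; simp [cr]
      · rw [h]; simp only [cr]; apply le_of_eq; ring
      · rw [h]; exact (hccw i).le
      · rw [h]
        have h3 := hccw (i+3)
        have z1 : ∀ i : Fin 4, i + 3 + 1 = i := by decide
        have z2 : ∀ i : Fin 4, i + 3 + 2 = i + 1 := by decide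
        rw [z1, z2] at h3
        refine h3.le.trans (le_of_eq ?_)
        simp [cr]; ring
    exact convexHull_min hsub hconv hx
  classical
  set a : Fin 4 → ℝ := fun i => if ‖P i‖ = ‖P 0‖ then 1 else 0 with ha
  have ha1 : ∀ i, (‖P i‖ = ‖P 0‖ ∧ a i = 1) ∨ (‖P i‖ < ‖P 0‖ ∧ a i = 0) := by
    intro i
    by_cases h : ‖P i‖ = ‖P 0‖
    · left; exact ⟨h, by simp [ha, h]⟩
    · right; exact ⟨lt_of_le_of_ne (h0 i) h, by simp [ha, h]⟩
  have ha2 : ∀ i, (‖P i‖ = ‖P 0‖ ∧ a i = 1) ∨ (‖P i‖ ≤ ‖P 0‖ ∧ a i = 0) := fun i =>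
    (ha1 i).imp id (fun h => ⟨h.1.le, h.2⟩)
  have ha0 : a 0 = 1 := by simp [ha]
  have main := assembly0 P T l hT1 hlp hP hTT hinj hside ‖P 0‖ hR h0 a ha1 hbal
  have z1 : (0:Fin 4)+1 = 1 := rfl
  have z2 : (1:Fin 4)+1 = 2 := rfl
  have z3 : (2:Fin 4)+1 = 3 := rfl
  have z4 : (3:Fin 4)+1 = 0 := rfl
  simp only [Fin.sum_univ_four, z1, z2, z3, z4, ha0] at main
  refine core (hT1 0) (hT1 1) (hT1 2) (hT1 3) (hlp 0) (hlp 1) (hlp 2) (hlp 3) (hP 0) (hP 1) (hP 2) (hP 3)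
    (hTT 0) (hTT 1) (hTT 2) (hTT 3) rfl (ha2 1) (ha2 2) (ha2 3) rfl rfl rfl rfl ?_ ?_ ?_ ?_
  · simpa only [if_true] using main 0
  · simpa only [if_true] using main 1
  · simpa only [if_true] using main 2
  · simpa only [if_true] using main 3

open Real Filter Topology in
lemma assembly (P : Fin 4 → ℂ) (hccw : ∀ i, 0 < cr (P (i+1) - P i) (P (i+2) - P i))
    (hbal : ∀ᵐ r ∂(volume.restrict (Ici (0:ℝ))), ∫ θ in (-π)..π,
      ((convexHull ℝ (range P)).indicator (fun _ => (1:ℝ)) (r • Complex.exp (θ * Complex.I))) •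
        Complex.exp (θ * Complex.I) = 0) :
    convexHull ℝ (range P) = -convexHull ℝ (range P) := by
  obtain ⟨k, hk⟩ := Finite.exists_max (fun i => ‖P i‖)
  have hr : range (fun i => P (k + i)) = range P := (Equiv.addLeft k).surjective.range_comp P
  obtain ⟨h1, h2⟩ := assembly1 (fun i => P (k + i))
    (by intro i; have := hccw (k + i); simpa only [add_assoc] using this)
    (by intro i; simpa using hk (k + i)) (by rw [hr]; exact hbal)
  have hneg : ∀ i, -P (k + i) = P (k + (i + 2)) := by
    intro i
    fin_cases i
    · exact neg_eq_of_add_eq_zero_right h1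
    · exact neg_eq_of_add_eq_zero_right h2
    · exact neg_eq_of_add_eq_zero_left h1
    · exact neg_eq_of_add_eq_zero_left h2
  have hsym : -range P = range P := by
    rw [← hr]
    ext x
    rw [Set.mem_neg]
    constructor
    · rintro ⟨i, hi⟩
      exact ⟨i + 2, by rw [← neg_neg x, ← hi]; exact (hneg i).symm⟩
    · rintro ⟨i, rfl⟩
      exact ⟨i + 2, (hneg i).symm⟩
  rw [← convexHull_neg, hsym]

open Real Filter Topology in
lemma cross_pos {A B C D : ℂ} {s t : ℝ} (hs : 0 < s) (hs1 : s < 1) (ht : 0 < t) (ht1 : t < 1)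
    (hX : A + s • (C - A) = B + t • (D - B)) (hpos : 0 < cr (C - A) (D - B))
    {Ω : Set ℂ} (hΩ : Ω = convexHull ℝ {A, B, C, D})
    (hbal : ∀ᵐ r ∂(volume.restrict (Ici (0:ℝ))), ∫ θ in (-π)..π,
      (Ω.indicator (fun _ => (1:ℝ)) (r • Complex.exp (θ * Complex.I))) •
        Complex.exp (θ * Complex.I) = 0) : Ω = -Ω := by
  have hr : range ![A, B, C, D] = {A, B, C, D} := by
    simp only [Matrix.range_cons, Matrix.range_empty, union_empty, singleton_union]
  rw [← hr] at hΩ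
  subst hΩ
  refine assembly _ ?_ hbal
  have e1 := congrArg Complex.re hX
  have e2 := congrArg Complex.im hX
  simp only [Complex.add_re, Complex.add_im, Complex.smul_re, Complex.smul_im, smul_eq_mul,
    Complex.sub_re, Complex.sub_im] at e1 e2
  have f0 : cr (B - A) (C - A) = t * cr (C - A) (D - B) := by
    simp only [cr, Complex.sub_re, Complex.sub_im]
    linear_combination -(e1 * (C.im - A.im) - e2 * (C.re - A.re))
  have f1 : cr (C - B) (D - B) = (1 - s) * cr (C - A) (D - B) := by
    simp only [cr, Complex.sub_re, Complex.sub_im]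
    linear_combination (e1 * (D.im - B.im) - e2 * (D.re - B.re))
  have f2 : cr (D - C) (A - C) = (1 - t) * cr (C - A) (D - B) := by
    simp only [cr, Complex.sub_re, Complex.sub_im]
    linear_combination (e1 * (C.im - A.im) - e2 * (C.re - A.re))
  have f3 : cr (A - D) (B - D) = s * cr (C - A) (D - B) := by
    simp only [cr, Complex.sub_re, Complex.sub_im]
    linear_combination -(e1 * (D.im - B.im) - e2 * (D.re - B.re))
  intro i
  fin_cases i
  · change 0 < cr (B - A) (C - A); rw [f0]; positivity
  · change 0 < cr (C - B) (D - B); rw [f1]; exact mul_pos (by linarith) hpos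
  · change 0 < cr (D - C) (A - C); rw [f2]; exact mul_pos (by linarith) hpos
  · change 0 < cr (A - D) (B - D); rw [f3]; positivity

lemma cross_ne {A B C D : ℂ} {s t : ℝ} (hs : 0 < s) (hs1 : s < 1) (ht : 0 < t) (ht1 : t < 1)
    (hX : A + s • (C - A) = B + t • (D - B)) (hA : A ∉ segment ℝ B D)
    (hB : B ∉ segment ℝ A C) (hD : D ∉ segment ℝ A C) : cr (C - A) (D - B) ≠ 0 := by
  intro h
  have hv : C - A ≠ 0 := by
    intro h0
    apply hA
    rw [segment_eq_image', mem_image]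
    refine ⟨t, ⟨ht.le, ht1.le⟩, ?_⟩
    rw [← hX, h0, smul_zero, add_zero]
  obtain ⟨k, hk⟩ : ∃ k : ℝ, D - B = k • (C - A) := by
    set v := C - A
    set w := D - B
    have hn : 0 < v.re^2 + v.im^2 := by
      by_contra hh
      push Not at hh
      apply hv
      apply Complex.ext
      · simp only [Complex.zero_re]; nlinarith [sq_nonneg v.re, sq_nonneg v.im]
      · simp only [Complex.zero_im]; nlinarith [sq_nonneg v.re, sq_nonneg v.im]
    refine ⟨(v.re * w.re + v.im * w.im) / (v.re^2 + v.im^2), ?_⟩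
    simp only [cr] at h
    apply Complex.ext
    · simp only [Complex.smul_re, smul_eq_mul]
      field_simp
      linear_combination (-v.im) * h
    · simp only [Complex.smul_im, smul_eq_mul]
      field_simp
      linear_combination v.re * h
  have hBe : B = A + (s - t * k) • (C - A) := by
    rw [hk] at hX
    rw [sub_smul, ← add_sub_assoc, hX, mul_smul]; ring
  have hDe : D = A + (s + (1 - t) * k) • (C - A) := by
    have : D = B + k • (C - A) := by rw [← hk]; ring
    rw [this, hBe]; module
  have key : ∀ x : ℝ, A + x • (C - A) ∉ segment ℝ A C → x < 0 ∨ 1 < x := by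
    intro x hx
    by_contra hh
    push Not at hh
    exact hx (by rw [segment_eq_image']; exact ⟨x, hh, rfl⟩)
  have kB := key _ (hBe ▸ hB)
  have kD := key _ (hDe ▸ hD)
  have hk0 : k ≠ 0 := by
    rintro rfl
    rcases kB with h | h <;> linarith
  have hAB : A = B + ((t * k - s) / k) • (D - B) := by
    rw [hk, smul_smul, div_mul_cancel₀ _ hk0]
    conv_rhs => rw [hBe]
    module
  apply hA
  rw [segment_eq_image', mem_image]
  refine ⟨(t * k - s) / k, ?_, hAB.symm⟩
  rcases kB with h | h
  · have hkp : 0 < k := by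
      by_contra hh
      push Not at hh
      nlinarith
    constructor
    · apply div_nonneg <;> linarith
    · rw [div_le_one hkp]; nlinarith
  · have hkn : k < 0 := by
      by_contra hh
      push Not at hh
      nlinarith
    have h2 : s + (1 - t) * k < 0 := by
      rcases kD with h' | h'
      · exact h'
      · nlinarith
    constructor
    · apply div_nonneg_of_nonpos <;> nlinarith
    · rw [div_le_one_of_neg hkn]; linarith

open Real Filter Topology in
lemma cross {A B C D : ℂ} (hA : A ∉ segment ℝ B D) (hC : C ∉ segment ℝ B D)
    (hB : B ∉ segment ℝ A C) (hD : D ∉ segment ℝ A C) 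
    (hX : (segment ℝ A C ∩ segment ℝ B D).Nonempty)
    {Ω : Set ℂ} (hΩ : Ω = convexHull ℝ {A, B, C, D})
    (hbal : ∀ᵐ r ∂(volume.restrict (Ici (0:ℝ))), ∫ θ in (-π)..π,
      (Ω.indicator (fun _ => (1:ℝ)) (r • Complex.exp (θ * Complex.I))) •
        Complex.exp (θ * Complex.I) = 0) : Ω = -Ω := by
  obtain ⟨X, hX1, hX2⟩ := hX
  have hX1' := hX1
  have hX2' := hX2
  rw [segment_eq_image'] at hX1' hX2'
  obtain ⟨s, ⟨hs0, hs1⟩, hsX⟩ := hX1'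
  obtain ⟨t, ⟨ht0, ht1⟩, htX⟩ := hX2'
  simp only at hsX htX
  have hs : 0 < s := lt_of_le_of_ne hs0 (by rintro rfl; apply hA; rw [zero_smul, add_zero] at hsX; rwa [hsX])
  have ht : 0 < t := lt_of_le_of_ne ht0 (by rintro rfl; apply hB; rw [zero_smul, add_zero] at htX; rwa [htX])
  have hs' : s < 1 := lt_of_le_of_ne hs1 (by 
    rintro rfl; apply hC; rw [one_smul, add_sub_cancel] at hsX; rwa [hsX])
  have ht' : t < 1 := lt_of_le_of_ne ht1 (by 
    rintro rfl; apply hD; rw [one_smul, add_sub_cancel] at htX; rwa [htX])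
  have hne := cross_ne hs hs' ht ht' (hsX.trans htX.symm) hA hB hD
  rcases lt_or_gt_of_ne hne with h | h
  · refine cross_pos (A := A) (B := D) (C := C) (D := B) (s := s) (t := 1 - t) hs hs' (by linarith) (by linarith) ?_ ?_ 
      (hΩ.trans (by congr 1; ext x; simp; tauto)) hbal
    · rw [hsX, ← htX]; module
    · simp only [cr, Complex.sub_re, Complex.sub_im] at h ⊢; linarith
  · exact cross_pos hs hs' ht ht' (hsX.trans htX.symm) h hΩ hbal

open Real Filter Topology in
lemma plane {A B C D : ℂ} (hA : A ∉ convexHull ℝ {B, C, D}) (hB : B ∉ convexHull ℝ {A, C, D})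
    (hC : C ∉ convexHull ℝ {A, B, D}) (hD : D ∉ convexHull ℝ {A, B, C})
    (hbal : ∀ᵐ r ∂(volume.restrict (Ici (0:ℝ))), ∫ θ in (-π)..π,
      ((convexHull ℝ {A, B, C, D}).indicator (fun _ => (1:ℝ)) (r • Complex.exp (θ * Complex.I))) •
        Complex.exp (θ * Complex.I) = 0) :
    convexHull ℝ {A, B, C, D} = -convexHull ℝ {A, B, C, D} := by
  have hni : ¬ AffineIndependent ℝ ![A, B, C, D] := by
    intro h
    have := h.card_le_finrank_succ
    have h2 : Module.finrank ℝ (vectorSpan ℝ (range ![A, B, C, D])) ≤ Module.finrank ℝ ℂ :=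
      Submodule.finrank_le _
    rw [Complex.finrank_real_complex] at h2
    simp at this
    omega
  obtain ⟨I, X, hX1, hX2⟩ := Convex.radon_partition hni
  have sub : ∀ (J : Set (Fin 4)) (S : Set ℂ), (0 ∈ J → A ∈ S) → (1 ∈ J → B ∈ S) → (2 ∈ J → C ∈ S) →
      (3 ∈ J → D ∈ S) → ![A, B, C, D] '' J ⊆ S := by
    rintro J S h0 h1 h2 h3 _ ⟨i, hi, rfl⟩
    fin_cases i
    · exact h0 hi
    · exact h1 hi
    · exact h2 hi
    · exact h3 hi
  have nil : ∀ U : Set ℂ, U ⊆ ∅ → X ∈ convexHull ℝ U → False := by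
    intro U h hX
    have := convexHull_mono (𝕜 := ℝ) h hX
    simp at this
  have one : ∀ (x : ℂ) (S U V : Set ℂ), x ∉ convexHull ℝ S → X ∈ convexHull ℝ U → X ∈ convexHull ℝ V →
      U ⊆ {x} → V ⊆ S → False := by
    intro x S U V hx hU hV h1 h2
    have a1 := convexHull_mono (𝕜 := ℝ) h1 hU
    rw [convexHull_singleton, mem_singleton_iff] at a1
    exact hx (a1 ▸ convexHull_mono h2 hV)
  have seg : ∀ (x : ℂ) (S : Set ℂ) (y z : ℂ), x ∉ convexHull ℝ S → y ∈ S → z ∈ S → x ∉ segment ℝ y z :=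
    fun x S y z h hy hz hx => h (segment_subset_convexHull hy hz hx)
  have inter : ∀ (U V : Set ℂ) (x y z w : ℂ), X ∈ convexHull ℝ U → X ∈ convexHull ℝ V →
      U ⊆ {x, y} → V ⊆ {z, w} → (segment ℝ x y ∩ segment ℝ z w).Nonempty := by
    intro U V x y z w hU hV h1 h2
    refine ⟨X, ?_, ?_⟩
    · rw [← convexHull_pair]; exact convexHull_mono h1 hU
    · rw [← convexHull_pair]; exact convexHull_mono h2 hV
  have pAC : (segment ℝ A C ∩ segment ℝ B D).Nonempty →
      convexHull ℝ {A, B, C, D} = -convexHull ℝ {A, B, C, D} := fun h =>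
    cross (seg _ _ _ _ hA (by simp) (by simp)) (seg _ _ _ _ hC (by simp) (by simp))
      (seg _ _ _ _ hB (by simp) (by simp)) (seg _ _ _ _ hD (by simp) (by simp)) h rfl hbal
  have pAB : (segment ℝ A B ∩ segment ℝ C D).Nonempty →
      convexHull ℝ {A, B, C, D} = -convexHull ℝ {A, B, C, D} := fun h =>
    cross (seg _ _ _ _ hA (by simp) (by simp)) (seg _ _ _ _ hB (by simp) (by simp))
      (seg _ _ _ _ hC (by simp) (by simp)) (seg _ _ _ _ hD (by simp) (by simp)) h 
      (by congr 1; ext x; simp; tauto) hbal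
  have pAD : (segment ℝ A D ∩ segment ℝ B C).Nonempty →
      convexHull ℝ {A, B, C, D} = -convexHull ℝ {A, B, C, D} := fun h =>
    cross (seg _ _ _ _ hA (by simp) (by simp)) (seg _ _ _ _ hD (by simp) (by simp))
      (seg _ _ _ _ hB (by simp) (by simp)) (seg _ _ _ _ hC (by simp) (by simp)) h 
      (by congr 1; ext x; simp; tauto) hbal
  by_cases h0 : (0 : Fin 4) ∈ I <;> by_cases h1 : (1 : Fin 4) ∈ I <;>
    by_cases h2 : (2 : Fin 4) ∈ I <;> by_cases h3 : (3 : Fin 4) ∈ I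
  · exact (nil _ (sub _ _ (by simp [h0]) (by simp [h1]) (by simp [h2]) (by simp [h3])) hX2).elim
  · exact (one _ _ _ _ hD hX2 hX1 (sub _ _ (by simp [h0]) (by simp [h1]) (by simp [h2]) (by simp [h3])) (sub _ _ (by simp [h0]) (by simp [h1]) (by simp [h2]) (by simp [h3]))).elim
  · exact (one _ _ _ _ hC hX2 hX1 (sub _ _ (by simp [h0]) (by simp [h1]) (by simp [h2]) (by simp [h3])) (sub _ _ (by simp [h0]) (by simp [h1]) (by simp [h2]) (by simp [h3]))).elim
  · exact pAB (inter _ _ _ _ _ _ hX1 hX2 (sub _ _ (by simp [h0]) (by simp [h1]) (by simp [h2]) (by simp [h3])) (sub _ _ (by simp [h0]) (by simp [h1]) (by simp [h2]) (by simp [h3])))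
  · exact (one _ _ _ _ hB hX2 hX1 (sub _ _ (by simp [h0]) (by simp [h1]) (by simp [h2]) (by simp [h3])) (sub _ _ (by simp [h0]) (by simp [h1]) (by simp [h2]) (by simp [h3]))).elim
  · exact pAC (inter _ _ _ _ _ _ hX1 hX2 (sub _ _ (by simp [h0]) (by simp [h1]) (by simp [h2]) (by simp [h3])) (sub _ _ (by simp [h0]) (by simp [h1]) (by simp [h2]) (by simp [h3])))
  · exact pAD (inter _ _ _ _ _ _ hX1 hX2 (sub _ _ (by simp [h0]) (by simp [h1]) (by simp [h2]) (by simp [h3])) (sub _ _ (by simp [h0]) (by simp [h1]) (by simp [h2]) (by simp [h3])))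
  · exact (one _ _ _ _ hA hX1 hX2 (sub _ _ (by simp [h0]) (by simp [h1]) (by simp [h2]) (by simp [h3])) (sub _ _ (by simp [h0]) (by simp [h1]) (by simp [h2]) (by simp [h3]))).elim
  · exact (one _ _ _ _ hA hX2 hX1 (sub _ _ (by simp [h0]) (by simp [h1]) (by simp [h2]) (by simp [h3])) (sub _ _ (by simp [h0]) (by simp [h1]) (by simp [h2]) (by simp [h3]))).elim
  · exact pAD (inter _ _ _ _ _ _ hX2 hX1 (sub _ _ (by simp [h0]) (by simp [h1]) (by simp [h2]) (by simp [h3])) (sub _ _ (by simp [h0]) (by simp [h1]) (by simp [h2]) (by simp [h3])))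
  · exact pAC (inter _ _ _ _ _ _ hX2 hX1 (sub _ _ (by simp [h0]) (by simp [h1]) (by simp [h2]) (by simp [h3])) (sub _ _ (by simp [h0]) (by simp [h1]) (by simp [h2]) (by simp [h3])))
  · exact (one _ _ _ _ hB hX1 hX2 (sub _ _ (by simp [h0]) (by simp [h1]) (by simp [h2]) (by simp [h3])) (sub _ _ (by simp [h0]) (by simp [h1]) (by simp [h2]) (by simp [h3]))).elim
  · exact pAB (inter _ _ _ _ _ _ hX2 hX1 (sub _ _ (by simp [h0]) (by simp [h1]) (by simp [h2]) (by simp [h3])) (sub _ _ (by simp [h0]) (by simp [h1]) (by simp [h2]) (by simp [h3])))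
  · exact (one _ _ _ _ hC hX1 hX2 (sub _ _ (by simp [h0]) (by simp [h1]) (by simp [h2]) (by simp [h3])) (sub _ _ (by simp [h0]) (by simp [h1]) (by simp [h2]) (by simp [h3]))).elim
  · exact (one _ _ _ _ hD hX1 hX2 (sub _ _ (by simp [h0]) (by simp [h1]) (by simp [h2]) (by simp [h3])) (sub _ _ (by simp [h0]) (by simp [h1]) (by simp [h2]) (by simp [h3]))).elim
  · exact (nil _ (sub _ _ (by simp [h0]) (by simp [h1]) (by simp [h2]) (by simp [h3])) hX1).elim

theorem stmt7 (A B C D : EuclideanSpace ℝ (Fin 2))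
    (hA : A ∉ convexHull ℝ ({B, C, D} : Set (EuclideanSpace ℝ (Fin 2))))
    (hB : B ∉ convexHull ℝ ({A, C, D} : Set (EuclideanSpace ℝ (Fin 2))))
    (hC : C ∉ convexHull ℝ ({A, B, D} : Set (EuclideanSpace ℝ (Fin 2))))
    (hD : D ∉ convexHull ℝ ({A, B, C} : Set (EuclideanSpace ℝ (Fin 2))))
    (hbal : SatisfiesBalanceLaw (convexHull ℝ {A, B, C, D})) :
    convexHull ℝ ({A, B, C, D} : Set (EuclideanSpace ℝ (Fin 2))) =
      -(convexHull ℝ ({A, B, C, D} : Set (EuclideanSpace ℝ (Fin 2)))) := by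
  set L := Complex.orthonormalBasisOneI.repr with hL
  obtain ⟨A, rfl⟩ := L.surjective A
  obtain ⟨B, rfl⟩ := L.surjective B
  obtain ⟨C, rfl⟩ := L.surjective C
  obtain ⟨D, rfl⟩ := L.surjective D
  have him : ∀ S : Set ℂ, convexHull ℝ (L '' S) = L '' convexHull ℝ S := fun S =>
    (L.toLinearEquiv.toLinearMap.image_convexHull S).symm
  have h3 : ∀ x y z : ℂ, ({L x, L y, L z} : Set (EuclideanSpace ℝ (Fin 2))) = L '' {x, y, z} := by
    intro x y z; simp only [image_insert_eq, image_singleton]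
  have h4 : ({L A, L B, L C, L D} : Set (EuclideanSpace ℝ (Fin 2))) = L '' {A, B, C, D} := by
    simp only [image_insert_eq, image_singleton]
  rw [h3, him, L.injective.mem_set_image] at hA hB hC hD
  rw [h4, him] at hbal ⊢
  have main := plane hA hB hC hD ?_
  · have hm : ∀ y ∈ convexHull ℝ {A, B, C, D}, -y ∈ convexHull ℝ {A, B, C, D} :=
      fun y hy => Set.mem_neg.1 ((Set.ext_iff.1 main y).1 hy)
    ext x
    simp only [Set.mem_neg, mem_image]
    constructor
    · rintro ⟨y, hy, rfl⟩
      exact ⟨-y, hm y hy, by rw [map_neg]⟩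
    · rintro ⟨y, hy, hyx⟩
      exact ⟨-y, hm y hy, by rw [map_neg, hyx, neg_neg]⟩
  · unfold SatisfiesBalanceLaw at hbal
    filter_upwards [hbal] with r hr
    have e : ((2:ℕ):ℝ) - 1 = 1 := by norm_num
    rw [e] at hr
    have h := sphere_integral _ hr
    rw [← hL] at h
    have hi : ∀ θ : ℝ, ((L '' convexHull ℝ {A, B, C, D}).indicator (fun _ => (1:ℝ))
        (r • L (Complex.exp (θ * Complex.I)))) • L (Complex.exp (θ * Complex.I)) =
        L (((convexHull ℝ {A, B, C, D}).indicator (fun _ => (1:ℝ))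
        (r • Complex.exp (θ * Complex.I))) • Complex.exp (θ * Complex.I)) := by
      intro θ
      rw [map_smul, ← map_smul L r]
      congr 1
      by_cases hz : r • Complex.exp (θ * Complex.I) ∈ convexHull ℝ {A, B, C, D}
      · rw [indicator_of_mem hz, indicator_of_mem (mem_image_of_mem L hz)]
      · rw [indicator_of_notMem hz, indicator_of_notMem]
        rwa [L.injective.mem_set_image]
    simp only [hi] at h
    rw [intervalIntegral.integral_of_le (by linarith [Real.pi_pos])] at h ⊢
    have hc := L.toContinuousLinearEquiv.integral_comp_comm (μ := volume.restrict (Ioc (-Real.pi) Real.pi))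
      (fun θ : ℝ => ((convexHull ℝ {A, B, C, D}).indicator (fun _ => (1:ℝ))
        (r • Complex.exp (θ * Complex.I))) • Complex.exp (θ * Complex.I))
    have h' := hc.symm.trans h
    exact L.toContinuousLinearEquiv.map_eq_zero_iff.1 h'
end
end

section
/- Let Ω be a convex body in ℝ^m (a compact convex set with nonempty interior), let α be a real number with α > −1/m, and let γ = α/(1 + mα) if α ≠ 0 and γ = 0 if α = 0. Let φ : ℝ^m → [0,∞) be continuous and strictly α-concave on ℝ^m. Then the function G_Ω(x) = ∫_Ω φ(x−y) dy is strictly γ-concave on ℝ^m. -/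
open MeasureTheory

noncomputable section

/-- The `α`-power mean `((1-l) a^α + l b^α)^{1/α}` of nonnegative numbers `a, b` with
weight `l`, for `α ∈ ℝ ∪ {±∞}`, interpreted as `0` whenever `a b = 0`, as the geometric
mean `a^{1-l} b^l` for `α = 0`, as `max` for `α = +∞` and as `min` for `α = −∞`. -/
def powMean (α : EReal) (l a b : ℝ) : ℝ :=
  if a = 0 ∨ b = 0 then 0
  else if α = ⊤ then max a b
  else if α = ⊥ then min a b
  else if α = 0 then a ^ (1 - l) * b ^ l
  else ((1 - l) * a ^ α.toReal + l * b ^ α.toReal) ^ α.toReal⁻¹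

/-- A nonnegative function `φ` on a real vector space is strictly `α`-concave if
`φ((1-l)x + l y) > ((1-l)φ(x)^α + l φ(y)^α)^{1/α}` for all `x ≠ y` and `0 < l < 1`. -/
def StrictAlphaConcave {V : Type*} [AddCommGroup V] [Module ℝ V]
    (α : EReal) (φ : V → ℝ) : Prop :=
  ∀ x y : V, x ≠ y → ∀ l : ℝ, 0 < l → l < 1 →
    powMean α l (φ x) (φ y) < φ ((1 - l) • x + l • y)

open scoped Pointwise


/-- real power mean -/
def pmr (α l a b : ℝ) : ℝ :=
  if α = 0 then a ^ (1 - l) * b ^ l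
  else ((1 - l) * a ^ α + l * b ^ α) ^ α⁻¹

lemma pmr_pos {α l a b : ℝ} (hl : 0 < l) (hl1 : l < 1) (ha : 0 < a) (hb : 0 < b) :
    0 < pmr α l a b := by
  have : 0 < 1 - l := by linarith
  unfold pmr
  split_ifs <;> positivity

lemma pmr_smul {α l a b t : ℝ} (hl : 0 < l) (hl1 : l < 1) (ha : 0 < a) (hb : 0 < b)
    (ht : 0 < t) : pmr α l (t * a) (t * b) = t * pmr α l a b := by
  have h1 : 0 < 1 - l := by linarith
  unfold pmr
  split_ifs with h
  · rw [Real.mul_rpow ht.le ha.le, Real.mul_rpow ht.le hb.le]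
    have : t ^ (1 - l) * t ^ l = t := by
      rw [← Real.rpow_add ht]; simp
    calc _ = (t ^ (1 - l) * t ^ l) * (a ^ (1 - l) * b ^ l) := by ring
      _ = _ := by rw [this]
  · rw [Real.mul_rpow ht.le ha.le, Real.mul_rpow ht.le hb.le]
    have : (1 - l) * (t ^ α * a ^ α) + l * (t ^ α * b ^ α)
      = t ^ α * ((1 - l) * a ^ α + l * b ^ α) := by ring
    rw [this, Real.mul_rpow (by positivity) (by positivity), ← Real.rpow_mul ht.le,
      mul_inv_cancel₀ h, Real.rpow_one]

lemma pmr_mono {α l a b a' b' : ℝ} (hα : α ≤ 0) (hl : 0 < l) (hl1 : l < 1) (ha : 0 < a)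
    (hb : 0 < b) (haa : a ≤ a') (hbb : b ≤ b') : pmr α l a b ≤ pmr α l a' b' := by
  have h1 : 0 < 1 - l := by linarith
  have ha' : 0 < a' := by linarith
  have hb' : 0 < b' := by linarith
  unfold pmr
  split_ifs with h
  · gcongr
  · apply Real.rpow_le_rpow_of_nonpos (by positivity)
    · have := Real.rpow_le_rpow_of_nonpos ha haa hα
      have := Real.rpow_le_rpow_of_nonpos hb hbb hα
      gcongr
    · exact inv_nonpos.2 hα

lemma pmr_holder {α l a b c d : ℝ} (hα : α ≤ 0) (hα1 : -1 < α) (hl : 0 < l) (hl1 : l < 1)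
    (ha : 0 < a) (hb : 0 < b) (hc : 0 < c) (hd : 0 < d) :
    pmr (α / (1 + α)) l (a * c) (b * d) ≤ pmr α l a b * ((1 - l) * c + l * d) := by
  have h1 : 0 < 1 - l := by linarith
  have h1a : 0 < 1 + α := by linarith
  rcases eq_or_lt_of_le hα with h0 | h0
  · subst h0
    simp only [zero_div, pmr, if_true]
    rw [Real.mul_rpow ha.le hc.le, Real.mul_rpow hb.le hd.le]
    have := Real.geom_mean_le_arith_mean2_weighted h1.le hl.le hc.le hd.le (by ring)
    calc _ = (a ^ (1 - l) * b ^ l) * (c ^ (1 - l) * d ^ l) := by ring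
      _ ≤ _ := by gcongr
  · have hγ : α / (1 + α) < 0 := div_neg_of_neg_of_pos h0 h1a
    simp only [pmr, if_neg h0.ne, if_neg hγ.ne]
    set γ := α / (1 + α) with hγd
    have hγi : γ⁻¹ = α⁻¹ * (1 + α) := by rw [hγd, inv_div]; field_simp
    set X := (1 - l) * (a * c) ^ γ + l * (b * d) ^ γ with hX
    set Y := (1 - l) * c + l * d with hY
    have hXp : 0 < X := by positivity
    have hYp : 0 < Y := by positivity
    have key : ∀ s t : ℝ, 0 < s → 0 < t →
        s ^ α ≤ X ^ (1 + α) * Y ^ (-α) * ((1 + α) * ((s * t) ^ γ / X) + (-α) * (t / Y)) := by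
      intro s t hs ht
      have := Real.geom_mean_le_arith_mean2_weighted (w₁ := 1 + α) (w₂ := -α)
        (p₁ := (s * t) ^ γ / X) (p₂ := t / Y) h1a.le (by linarith) (by positivity)
        (by positivity) (by ring)
      calc s ^ α = X ^ (1 + α) * Y ^ (-α) * (((s * t) ^ γ / X) ^ (1 + α) * (t / Y) ^ (-α)) := by
            rw [Real.div_rpow (by positivity) hXp.le, Real.div_rpow ht.le hYp.le,
              ← Real.rpow_mul (by positivity)]
            have : γ * (1 + α) = α := by rw [hγd]; field_simp
            rw [this, Real.mul_rpow hs.le ht.le, Real.rpow_neg ht.le]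
            have : t ^ α ≠ 0 := by positivity
            field_simp
        _ ≤ _ := by gcongr
    have hsum : (1 - l) * a ^ α + l * b ^ α ≤ X ^ (1 + α) * Y ^ (-α) := by
      calc _ ≤ (1 - l) * (X ^ (1 + α) * Y ^ (-α) * ((1 + α) * ((a * c) ^ γ / X) + (-α) * (c / Y)))
          + l * (X ^ (1 + α) * Y ^ (-α) * ((1 + α) * ((b * d) ^ γ / X) + (-α) * (d / Y))) := by
            have := key a c ha hc
            have := key b d hb hd
            gcongr
        _ = X ^ (1 + α) * Y ^ (-α) * ((1 + α) * (((1 - l) * (a * c) ^ γ + l * (b * d) ^ γ) / X)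
            + (-α) * (((1 - l) * c + l * d) / Y)) := by ring
        _ = _ := by
            rw [← hX, ← hY, div_self hXp.ne', div_self hYp.ne']; ring
    have h2 := Real.rpow_le_rpow_of_nonpos (by positivity) hsum (inv_nonpos.2 hα)
    rw [Real.mul_rpow (by positivity) (by positivity), ← Real.rpow_mul hXp.le,
      ← Real.rpow_mul hYp.le] at h2
    have e1 : -α * α⁻¹ = -1 := by
      rw [neg_mul, mul_inv_cancel₀ h0.ne]
    rw [e1, mul_comm (1 + α), ← hγi, Real.rpow_neg_one] at h2
    calc X ^ γ⁻¹ = X ^ γ⁻¹ * Y⁻¹ * Y := by field_simp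
      _ ≤ _ := by gcongr

lemma pmr_cont {E : Type*} [TopologicalSpace E] {α l : ℝ} (hl : 0 < l) (hl1 : l < 1)
    {f g : E → ℝ} (hf : Continuous f) (hg : Continuous g) (hf0 : ∀ x, 0 < f x)
    (hg0 : ∀ x, 0 < g x) : Continuous (fun x => pmr α l (f x) (g x)) := by
  have h1 : 0 < 1 - l := by linarith
  unfold pmr
  split_ifs with h
  · exact (hf.rpow_const fun x => Or.inl (hf0 x).ne').mul
      (hg.rpow_const fun x => Or.inl (hg0 x).ne')
  · refine Continuous.rpow_const ?_ fun x => Or.inl ?_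
    · exact ((hf.rpow_const fun x => Or.inl (hf0 x).ne').const_mul _).add
        ((hg.rpow_const fun x => Or.inl (hg0 x).ne').const_mul _)
    · have := hf0 x
      have := hg0 x
      positivity

/-- one-dimensional Brunn-Minkowski for compact sets -/
lemma bm1_compact {A B : Set ℝ} (hA : IsCompact A) (hB : IsCompact B) (hA0 : A.Nonempty)
    (hB0 : B.Nonempty) {l : ℝ} (hl : 0 < l) (hl1 : l < 1) {C : Set ℝ}
    (hC : ∀ x ∈ A, ∀ y ∈ B, (1 - l) * x + l * y ∈ C) :
    ENNReal.ofReal (1 - l) * volume A + ENNReal.ofReal l * volume B ≤ volume C := by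
  have h1 : 0 < 1 - l := by linarith
  obtain ⟨a, ha, hamax⟩ := hA.exists_isGreatest hA0
  obtain ⟨b, hb, hbmin⟩ := hB.exists_isLeast hB0
  set A' := (fun x => (1 - l) * x + l * b) '' A with hA'
  set B' := (fun y => (1 - l) * a + l * y) '' B with hB'
  have hA'c : IsCompact A' := hA.image (by fun_prop)
  have hB'c : IsCompact B' := hB.image (by fun_prop)
  have vA : volume A' = ENNReal.ofReal (1 - l) * volume A := by
    have : A' = (fun x => x + l * b) '' ((1 - l) • A) := by
      rw [hA', ← Set.image_smul, Set.image_image]; rfl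
    rw [this]
    simp [Measure.addHaar_smul, abs_of_pos h1]
  have vB : volume B' = ENNReal.ofReal l * volume B := by
    have : B' = (fun x => (1 - l) * a + x) '' (l • B) := by
      rw [hB', ← Set.image_smul, Set.image_image]; rfl
    rw [this]
    simp [Measure.addHaar_smul, abs_of_pos hl]
  have hint : A' ∩ B' ⊆ {(1 - l) * a + l * b} := by
    rintro z ⟨⟨x, hx, rfl⟩, ⟨y, hy, hxy⟩⟩
    have := hamax hx
    have := hbmin hy
    simp only at hxy ⊢
    have : l * b ≤ l * y := by gcongr
    have : (1 - l) * x ≤ (1 - l) * a := by gcongr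
    rw [Set.mem_singleton_iff]; linarith
  have hz : volume (A' ∩ B') = 0 := measure_mono_null hint (by simp)
  rw [← vA, ← vB, ← measure_union_add_inter A' hB'c.measurableSet, hz, add_zero]
  apply measure_mono
  rintro z (⟨x, hx, rfl⟩ | ⟨y, hy, rfl⟩)
  · exact hC x hx b hb
  · exact hC a ha y hy

lemma meas_iSup_pt {A : Set ℝ} (hA : MeasurableSet A) {a : ℝ} (ha : a ∈ A) :
    volume A = ⨆ K : {K : Set ℝ // K ⊆ A ∧ IsCompact K ∧ a ∈ K}, volume K.1 := by
  apply le_antisymm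
  · rw [hA.measure_eq_iSup_isCompact]
    refine iSup_le fun K => iSup_le fun hK => iSup_le fun hKc => ?_
    refine le_trans (measure_mono (Set.subset_insert a K)) ?_
    exact le_iSup (fun K : {K : Set ℝ // K ⊆ A ∧ IsCompact K ∧ a ∈ K} => volume K.1)
      ⟨insert a K, Set.insert_subset ha hK, hKc.insert a, Set.mem_insert _ _⟩
  · exact iSup_le fun K => measure_mono K.2.1

lemma bm1 {A B : Set ℝ} (hA : MeasurableSet A) (hB : MeasurableSet B) (hA0 : A.Nonempty)
    (hB0 : B.Nonempty) {l : ℝ} (hl : 0 < l) (hl1 : l < 1) {C : Set ℝ}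
    (hC : ∀ x ∈ A, ∀ y ∈ B, (1 - l) * x + l * y ∈ C) :
    ENNReal.ofReal (1 - l) * volume A + ENNReal.ofReal l * volume B ≤ volume C := by
  obtain ⟨a, ha⟩ := hA0
  obtain ⟨b, hb⟩ := hB0
  rw [meas_iSup_pt hA ha, meas_iSup_pt hB hb, ENNReal.mul_iSup, ENNReal.mul_iSup]
  have : Nonempty {K : Set ℝ // K ⊆ A ∧ IsCompact K ∧ a ∈ K} :=
    ⟨⟨{a}, by simpa using ha, isCompact_singleton, rfl⟩⟩
  have : Nonempty {K : Set ℝ // K ⊆ B ∧ IsCompact K ∧ b ∈ K} :=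
    ⟨⟨{b}, by simpa using hb, isCompact_singleton, rfl⟩⟩
  refine ENNReal.iSup_add_iSup_le fun K K' => ?_
  exact bm1_compact K.2.2.1 K'.2.2.1 ⟨a, K.2.2.2⟩ ⟨b, K'.2.2.2⟩ hl hl1
    fun x hx y hy => hC x (K.2.1 hx) y (K'.2.1 hy)

lemma bbl1 {α l : ℝ} (hα : α ≤ 0) (hα1 : -1 < α) (hl : 0 < l) (hl1 : l < 1)
    {f g h : ℝ → ℝ} (hf : Measurable f) (hg : Measurable g) (hh : Measurable h)
    (hf0 : ∀ x, 0 ≤ f x) (hg0 : ∀ x, 0 ≤ g x) (hh0 : ∀ x, 0 ≤ h x)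
    (hfb : BddAbove (Set.range f)) (hgb : BddAbove (Set.range g))
    (hfi : Integrable f) (hgi : Integrable g) (hhi : Integrable h)
    (hfp : 0 < ∫ x, f x) (hgp : 0 < ∫ x, g x)
    (H : ∀ x y, 0 < f x → 0 < g y → pmr α l (f x) (g y) ≤ h ((1 - l) * x + l * y)) :
    pmr (α / (1 + α)) l (∫ x, f x) (∫ x, g x) ≤ ∫ x, h x := by
  have h1 : 0 < 1 - l := by linarith
  have sup_pos : ∀ f : ℝ → ℝ, (∀ x, 0 ≤ f x) → BddAbove (Set.range f) → 0 < ∫ x, f x →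
      0 < ⨆ x, f x := by
    intro f hf0 hfb hfp
    by_contra hcon
    have : ∀ x, f x = 0 := fun x =>
      le_antisymm ((le_ciSup hfb x).trans (not_lt.1 hcon)) (hf0 x)
    simp [this] at hfp
  have hF := sup_pos f hf0 hfb hfp
  have hG := sup_pos g hg0 hgb hgp
  set F := ⨆ x, f x with hFd
  set G := ⨆ x, g x with hGd
  set M := pmr α l F G with hMd
  have hM : 0 < M := pmr_pos hl hl1 hF hG
  have key : ENNReal.ofReal (1 - l) * (∫⁻ x, ENNReal.ofReal (f x / F))
      + ENNReal.ofReal l * (∫⁻ x, ENNReal.ofReal (g x / G)) ≤ ∫⁻ x, ENNReal.ofReal (h x / M) := by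
    rw [lintegral_eq_lintegral_meas_lt _ (Filter.Eventually.of_forall fun x =>
        div_nonneg (hf0 x) hF.le) (hf.div_const F).aemeasurable,
      lintegral_eq_lintegral_meas_lt _ (Filter.Eventually.of_forall fun x =>
        div_nonneg (hg0 x) hG.le) (hg.div_const G).aemeasurable,
      lintegral_eq_lintegral_meas_lt _ (Filter.Eventually.of_forall fun x =>
        div_nonneg (hh0 x) hM.le) (hh.div_const M).aemeasurable,
      ← lintegral_const_mul' _ _ ENNReal.ofReal_ne_top,
      ← lintegral_const_mul' _ _ ENNReal.ofReal_ne_top, ← lintegral_add_left]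
    · refine setLIntegral_mono' measurableSet_Ioi fun t (ht : 0 < t) => ?_
      rcases lt_or_ge t 1 with ht1 | ht1
      · apply bm1 (measurableSet_lt measurable_const (hf.div_const F))
          (measurableSet_lt measurable_const (hg.div_const G)) _ _ hl hl1
        · intro x hx y hy
          simp only [Set.mem_ofPred_eq, lt_div_iff₀ hF, lt_div_iff₀ hG, lt_div_iff₀ hM] at hx hy ⊢
          have hfx : 0 < f x := lt_trans (by positivity) hx
          have hgy : 0 < g y := lt_trans (by positivity) hy
          refine lt_of_lt_of_le ?_ (H x y hfx hgy)
          obtain ⟨s, hs1, hs2⟩ : ∃ s, t < s ∧ s * F ≤ f x ∧ s * G ≤ g y := by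
            refine ⟨min (f x / F) (g y / G), ?_, ?_, ?_⟩
            · exact lt_min ((lt_div_iff₀ hF).2 hx) ((lt_div_iff₀ hG).2 hy)
            · exact (le_div_iff₀ hF).1 (min_le_left _ _)
            · exact (le_div_iff₀ hG).1 (min_le_right _ _)
          have hs : 0 < s := ht.trans hs1
          calc t * M < s * M := by gcongr
            _ = pmr α l (s * F) (s * G) := (pmr_smul hl hl1 hF hG hs).symm
            _ ≤ _ := pmr_mono hα hl hl1 (by positivity) (by positivity) hs2.1 hs2.2
        · obtain ⟨x, hx⟩ := exists_lt_of_lt_ciSup (f := f) (b := t * F) (by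
            rw [← hFd]; nlinarith)
          exact ⟨x, (lt_div_iff₀ hF).2 hx⟩
        · obtain ⟨x, hx⟩ := exists_lt_of_lt_ciSup (f := g) (b := t * G) (by
            rw [← hGd]; nlinarith)
          exact ⟨x, (lt_div_iff₀ hG).2 hx⟩
      · have e1 : {a | t < f a / F} = ∅ := by
          ext x
          simp only [Set.mem_ofPred_eq, Set.mem_empty_iff_false, iff_false, not_lt]
          exact le_trans ((div_le_one hF).2 (le_ciSup hfb x)) ht1
        have e2 : {a | t < g a / G} = ∅ := by
          ext x
          simp only [Set.mem_ofPred_eq, Set.mem_empty_iff_false, iff_false, not_lt]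
          exact le_trans ((div_le_one hG).2 (le_ciSup hgb x)) ht1
        simp [e1, e2]
    · apply Measurable.const_mul
      exact (Antitone.measurable fun s t hst => measure_mono fun x hx => lt_of_le_of_lt hst hx)
  rw [← ofReal_integral_eq_lintegral_ofReal (hfi.div_const F)
      (Filter.Eventually.of_forall fun x => div_nonneg (hf0 x) hF.le),
    ← ofReal_integral_eq_lintegral_ofReal (hgi.div_const G)
      (Filter.Eventually.of_forall fun x => div_nonneg (hg0 x) hG.le),
    ← ofReal_integral_eq_lintegral_ofReal (hhi.div_const M)
      (Filter.Eventually.of_forall fun x => div_nonneg (hh0 x) hM.le),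
    ← ENNReal.ofReal_mul h1.le, ← ENNReal.ofReal_mul hl.le, integral_div, integral_div,
    integral_div, ← ENNReal.ofReal_add (by positivity) (by positivity),
    ENNReal.ofReal_le_ofReal_iff (div_nonneg (integral_nonneg hh0) hM.le), le_div_iff₀ hM] at key
  have := pmr_holder (c := (∫ x, f x) / F) (d := (∫ x, g x) / G) hα hα1 hl hl1 hF hG
    (by positivity) (by positivity)
  rw [mul_div_cancel₀ _ hF.ne', mul_div_cancel₀ _ hG.ne'] at this
  linarith

/-- bounded measurable nonnegative functions with bounded support -/
structure NiceFn {n : ℕ} (f : (Fin n → ℝ) → ℝ) : Prop where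
  meas : Measurable f
  nonneg : ∀ x, 0 ≤ f x
  bdd : ∃ C, ∀ x, f x ≤ C
  supp : ∃ R : ℝ, ∀ x, f x ≠ 0 → ∀ i, |x i| ≤ R

lemma NiceFn.integrable {n : ℕ} {f : (Fin n → ℝ) → ℝ} (hf : NiceFn f) : Integrable f := by
  obtain ⟨C, hC⟩ := hf.bdd
  obtain ⟨R, hR⟩ := hf.supp
  have hs : Function.support f ⊆ Set.Icc (fun _ => -R) (fun _ => R) := by
    intro x hx
    exact ⟨fun i => (abs_le.1 (hR x hx i)).1, fun i => (abs_le.1 (hR x hx i)).2⟩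
  rw [← integrableOn_iff_integrable_of_support_subset hs]
  refine Measure.integrableOn_of_bounded (M := C) isCompact_Icc.measure_lt_top.ne
    hf.meas.aestronglyMeasurable (Filter.Eventually.of_forall fun x => ?_)
  rw [Real.norm_eq_abs, abs_of_nonneg (hf.nonneg x)]
  exact hC x

lemma measurable_cons' {n : ℕ} :
    Measurable (fun p : (Fin n → ℝ) × ℝ => (Fin.cons p.2 p.1 : Fin (n + 1) → ℝ)) := by
  rw [measurable_pi_iff]
  intro i
  refine Fin.cases ?_ (fun j => ?_) i
  · simpa using measurable_snd
  · simp only [Fin.cons_succ]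
    exact (measurable_pi_apply j).comp measurable_fst

lemma NiceFn.fibre {n : ℕ} {f : (Fin (n + 1) → ℝ) → ℝ} (hf : NiceFn f) (x : Fin n → ℝ) :
    Measurable (fun t : ℝ => f (Fin.cons t x)) ∧ Integrable (fun t : ℝ => f (Fin.cons t x)) ∧
      BddAbove (Set.range (fun t : ℝ => f (Fin.cons t x))) := by
  obtain ⟨C, hC⟩ := hf.bdd
  obtain ⟨R, hR⟩ := hf.supp
  have hm : Measurable (fun t : ℝ => f (Fin.cons t x)) :=
    hf.meas.comp (measurable_cons'.comp (measurable_const.prodMk measurable_id))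
  refine ⟨hm, ?_, ⟨C, by rintro _ ⟨t, rfl⟩; exact hC _⟩⟩
  have hs : Function.support (fun t : ℝ => f (Fin.cons t x)) ⊆ Set.Icc (-R) R := by
    intro t ht
    have := hR _ ht 0
    exact abs_le.1 (by simpa using this)
  rw [← integrableOn_iff_integrable_of_support_subset hs]
  refine Measure.integrableOn_of_bounded (M := C) isCompact_Icc.measure_lt_top.ne
    hm.aestronglyMeasurable (Filter.Eventually.of_forall fun t => ?_)
  rw [Real.norm_eq_abs, abs_of_nonneg (hf.nonneg _)]
  exact hC _

lemma NiceFn.marginal {n : ℕ} {f : (Fin (n + 1) → ℝ) → ℝ} (hf : NiceFn f) :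
    NiceFn (fun x : Fin n → ℝ => ∫ t : ℝ, f (Fin.cons t x)) := by
  obtain ⟨C, hC⟩ := hf.bdd
  obtain ⟨R, hR⟩ := hf.supp
  refine ⟨?_, fun x => integral_nonneg fun t => hf.nonneg _, ⟨C * volume.real (Set.Icc (-R) R), ?_⟩,
    ⟨R, ?_⟩⟩
  · exact ((hf.meas.comp measurable_cons').stronglyMeasurable.integral_prod_right').measurable
  · intro x
    have hs : Function.support (fun t : ℝ => f (Fin.cons t x)) ⊆ Set.Icc (-R) R := by
      intro t ht
      have := hR _ ht 0
      exact abs_le.1 (by simpa using this)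
    rw [← setIntegral_eq_integral_of_forall_compl_eq_zero (s := Set.Icc (-R) R)
      (fun t ht => by by_contra h; exact ht (hs h))]
    refine le_trans (le_abs_self _) ?_
    exact norm_setIntegral_le_of_norm_le_const (C := C)
      (f := fun t : ℝ => f (Fin.cons t x)) isCompact_Icc.measure_lt_top (fun t _ => by
      rw [Real.norm_eq_abs, abs_of_nonneg (hf.nonneg _)]
      exact hC _)
  · intro x hx i
    by_contra hcon
    apply hx
    have : ∀ t : ℝ, f (Fin.cons t x) = 0 := by
      intro t
      by_contra h
      exact hcon (by simpa using hR _ h i.succ)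
    simp [this]

lemma NiceFn.integral_marginal {n : ℕ} {f : (Fin (n + 1) → ℝ) → ℝ} (hf : NiceFn f) :
    ∫ x : Fin n → ℝ, ∫ t : ℝ, f (Fin.cons t x) = ∫ x, f x := by
  have e := (volume_preserving_piFinSuccAbove (fun _ : Fin (n + 1) => ℝ) 0).symm
  have hi := e.integrable_comp_of_integrable hf.integrable
  rw [← e.integral_comp']
  rw [Measure.volume_eq_prod] at hi ⊢
  refine Eq.trans ?_ (integral_prod_symm _ hi).symm
  refine integral_congr_ae (Filter.Eventually.of_forall fun x => ?_)
  refine integral_congr_ae (Filter.Eventually.of_forall fun t => ?_)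
  simp [MeasurableEquiv.piFinSuccAbove, Fin.insertNthEquiv]

theorem bbl (n : ℕ) : ∀ {α l : ℝ} (_ : α ≤ 0) (_ : 0 < 1 + n * α) (_ : 0 < l) (_ : l < 1)
    {f g h : (Fin n → ℝ) → ℝ} (_ : NiceFn f) (_ : NiceFn g) (_ : NiceFn h)
    (_ : 0 < ∫ x, f x) (_ : 0 < ∫ x, g x)
    (_ : ∀ x y, 0 < f x → 0 < g y → pmr α l (f x) (g y) ≤ h ((1 - l) • x + l • y)),
    pmr (α / (1 + n * α)) l (∫ x, f x) (∫ x, g x) ≤ ∫ x, h x := by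
  induction n with
  | zero =>
    intro α l hα hα1 hl hl1 f g h hf hg hh hfp hgp H
    have hI : ∀ f : (Fin 0 → ℝ) → ℝ, ∫ x, f x = f 0 := by
      intro f
      rw [Measure.volume_pi_eq_dirac 0, integral_dirac]
    rw [hI] at hfp hgp
    simp only [hI]
    have := H 0 0 hfp hgp
    simpa using this
  | succ n ih =>
    intro α l hα hα1 hl hl1 f g h hf hg hh hfp hgp H
    push_cast at hα1 ⊢
    have hn : (0 : ℝ) ≤ n := n.cast_nonneg
    have h1a : 0 < 1 + α := by nlinarith
    have hα' : α / (1 + α) ≤ 0 := div_nonpos_of_nonpos_of_nonneg hα h1a.le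
    have hd : 1 + n * (α / (1 + α)) = (1 + (n + 1) * α) / (1 + α) := by field_simp; ring
    have hγ : α / (1 + α) / (1 + n * (α / (1 + α))) = α / (1 + (n + 1) * α) := by
      rw [hd]; field_simp
    have := ih (α := α / (1 + α)) (l := l) hα' (by rw [hd]; positivity) hl hl1
      hf.marginal hg.marginal hh.marginal (by rwa [hf.integral_marginal])
      (by rwa [hg.integral_marginal]) ?_
    · rwa [hf.integral_marginal, hg.integral_marginal, hh.integral_marginal, hγ] at this
    · intro x y hx hy
      obtain ⟨f1, f2, f3⟩ := hf.fibre x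
      obtain ⟨g1, g2, g3⟩ := hg.fibre y
      obtain ⟨h1, h2, h3⟩ := hh.fibre ((1 - l) • x + l • y)
      refine bbl1 hα (by linarith) hl hl1 f1 g1 h1 (fun _ => hf.nonneg _) (fun _ => hg.nonneg _)
        (fun _ => hh.nonneg _) f3 g3 f2 g2 h2 hx hy ?_
      intro s t hs ht
      have := H _ _ hs ht
      convert this using 2
      ext i
      refine Fin.cases ?_ (fun j => ?_) i <;> simp

theorem bbl_euclid {m : ℕ} {α l : ℝ} (hα : α ≤ 0) (hα1 : 0 < 1 + m * α) (hl : 0 < l)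
    (hl1 : l < 1) {φ : EuclideanSpace ℝ (Fin m) → ℝ} (hφ : Continuous φ) (hφ0 : ∀ x, 0 < φ x)
    {A B C : Set (EuclideanSpace ℝ (Fin m))} (hA : MeasurableSet A) (hB : MeasurableSet B)
    (hC : MeasurableSet C) (hAb : Bornology.IsBounded A) (hBb : Bornology.IsBounded B)
    (hCb : Bornology.IsBounded C) {κ : ℝ} (hκ : 0 < κ)
    (hAp : 0 < ∫ x in A, φ x) (hBp : 0 < ∫ x in B, φ x)
    (hABC : ∀ x ∈ A, ∀ y ∈ B, (1 - l) • x + l • y ∈ C)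
    (H : ∀ x ∈ A, ∀ y ∈ B, κ * pmr α l (φ x) (φ y) ≤ φ ((1 - l) • x + l • y)) :
    κ * pmr (α / (1 + m * α)) l (∫ x in A, φ x) (∫ x in B, φ x) ≤ ∫ x in C, φ x := by
  have nice : ∀ (S : Set (EuclideanSpace ℝ (Fin m))), MeasurableSet S → Bornology.IsBounded S →
      ∀ c : ℝ, 0 < c → NiceFn (fun x : Fin m → ℝ => c * S.indicator φ (WithLp.toLp 2 x)) := by
    intro S hS hSb c hc
    obtain ⟨R, hR⟩ := hSb.exists_norm_le
    have hcl : IsCompact (closure S) := hSb.isCompact_closure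
    obtain ⟨D, hD⟩ := hcl.bddAbove_image hφ.continuousOn
    refine ⟨?_, ?_, ⟨c * max D 0, ?_⟩, ⟨R, ?_⟩⟩
    · exact ((hφ.measurable.indicator hS).comp (PiLp.volume_preserving_toLp (Fin m)).measurable).const_mul c
    · intro x
      exact mul_nonneg hc.le (Set.indicator_nonneg (fun x _ => (hφ0 x).le) _)
    · intro x
      gcongr
      by_cases hx : WithLp.toLp 2 x ∈ S
      · rw [Set.indicator_of_mem hx]
        exact le_max_of_le_left (hD ⟨_, subset_closure hx, rfl⟩)
      · rw [Set.indicator_of_notMem hx]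
        exact le_max_right _ _
    · intro x hx i
      have hxS : WithLp.toLp 2 x ∈ S := by
        by_contra h
        rw [Set.indicator_of_notMem h, mul_zero] at hx
        exact hx rfl
      exact (PiLp.norm_apply_le (WithLp.toLp 2 x) i).trans (hR _ hxS)
  have hI : ∀ (S : Set (EuclideanSpace ℝ (Fin m))), MeasurableSet S →
      ∀ c : ℝ, ∫ x : Fin m → ℝ, c * S.indicator φ (WithLp.toLp 2 x) = c * ∫ x in S, φ x := by
    intro S hS c
    rw [integral_const_mul, ← integral_indicator hS]
    congr 1
    exact (PiLp.volume_preserving_toLp (Fin m)).integral_comp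
      (MeasurableEquiv.toLp 2 _).measurableEmbedding _
  have := bbl m hα hα1 hl hl1 (nice A hA hAb 1 one_pos) (nice B hB hBb 1 one_pos)
    (nice C hC hCb κ⁻¹ (inv_pos.2 hκ)) (by rwa [hI A hA, one_mul]) (by rwa [hI B hB, one_mul]) ?_
  · rw [hI A hA, hI B hB, hI C hC, one_mul, one_mul, le_inv_mul_iff₀ hκ] at this
    exact this
  · intro x y hx hy
    have hxA : WithLp.toLp 2 x ∈ A := by
      by_contra h
      rw [Set.indicator_of_notMem h, mul_zero] at hx
      exact hx.ne rfl
    have hyB : WithLp.toLp 2 y ∈ B := by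
      by_contra h
      rw [Set.indicator_of_notMem h, mul_zero] at hy
      exact hy.ne rfl
    have hz : WithLp.toLp 2 ((1 - l) • x + l • y)
      = (1 - l) • WithLp.toLp 2 x + l • WithLp.toLp 2 y := rfl
    rw [hz, Set.indicator_of_mem hxA, Set.indicator_of_mem hyB,
      Set.indicator_of_mem (hABC _ hxA _ hyB), one_mul, one_mul, le_inv_mul_iff₀ hκ]
    exact H _ hxA _ hyB

lemma powMean_eq_pmr {α l a b : ℝ} (ha : 0 < a) (hb : 0 < b) :
    powMean (α : EReal) l a b = pmr α l a b := by
  simp [powMean, pmr, ha.ne', hb.ne']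

lemma powMean_nonneg {α l a b : ℝ} (hl : 0 < l) (hl1 : l < 1) (ha : 0 ≤ a) (hb : 0 ≤ b) :
    0 ≤ powMean (α : EReal) l a b := by
  by_cases h : a = 0 ∨ b = 0
  · simp [powMean, h]
  · push Not at h
    have ha' := lt_of_le_of_ne ha h.1.symm
    have hb' := lt_of_le_of_ne hb h.2.symm
    rw [powMean_eq_pmr ha' hb']
    exact (pmr_pos hl hl1 ha' hb').le

section
variable {V : Type*} [AddCommGroup V] [Module ℝ V] [Nontrivial V]

lemma strict_pos {α : ℝ} {φ : V → ℝ} (h0 : ∀ v, 0 ≤ φ v)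
    (h : StrictAlphaConcave (α : EReal) φ) (x : V) : 0 < φ x := by
  obtain ⟨v, hv⟩ := exists_ne (0 : V)
  have hne' : x - v ≠ x + v := by
    intro h
    have h2 : (2 : ℝ) • v = 0 := by
      rw [two_smul]
      have := congrArg (fun z => z - x + v) h
      have e1 : x - v - x + v = 0 := by abel
      have e2 : x + v - x + v = v + v := by abel
      rw [e1, e2] at this
      exact this.symm
    exact hv ((smul_eq_zero.1 h2).resolve_left (by norm_num))
  have := h (x - v) (x + v) hne' (1 / 2) (by norm_num) (by norm_num)
  have e : ((1 : ℝ) - 1 / 2) • (x - v) + (1 / 2 : ℝ) • (x + v) = x := by module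
  rw [e] at this
  exact lt_of_le_of_lt (powMean_nonneg (by norm_num) (by norm_num) (h0 _) (h0 _)) this

lemma strict_alpha_nonpos {α : ℝ} {φ : V → ℝ} (h0 : ∀ v, 0 ≤ φ v)
    (h : StrictAlphaConcave (α : EReal) φ) : α ≤ 0 := by
  by_contra hα
  push Not at hα
  have hp := strict_pos h0 h
  have key : ∀ x y : V, x ≠ y → ∀ l : ℝ, 0 < l → l < 1 →
      (1 - l) * φ x ^ α + l * φ y ^ α < φ ((1 - l) • x + l • y) ^ α := by
    intro x y hxy l hl hl1
    have h1 : 0 < 1 - l := by linarith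
    have hx := hp x
    have hy := hp y
    have := h x y hxy l hl hl1
    rw [powMean_eq_pmr hx hy, pmr, if_neg hα.ne'] at this
    have h2 := Real.rpow_lt_rpow (by positivity) this hα
    rwa [← Real.rpow_mul (by positivity), inv_mul_cancel₀ hα.ne', Real.rpow_one] at h2
  obtain ⟨p, c, hpc⟩ : ∃ p c : V, φ p ^ α < φ c ^ α := by
    obtain ⟨x, y, hxy⟩ := exists_pair_ne V
    have := key x y hxy (1 / 2) (by norm_num) (by norm_num)
    by_cases hlt : φ x ^ α < φ (((1 : ℝ) - 1 / 2) • x + (1 / 2 : ℝ) • y) ^ α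
    · exact ⟨_, _, hlt⟩
    · refine ⟨y, ((1 : ℝ) - 1 / 2) • x + (1 / 2 : ℝ) • y, ?_⟩
      linarith
  have hgp : 0 < φ p ^ α := Real.rpow_pos_of_pos (hp p) _
  have hgc : 0 < φ c ^ α := Real.rpow_pos_of_pos (hp c) _
  set l := (φ c ^ α - φ p ^ α) / φ c ^ α with hld
  have hl : 0 < l := div_pos (by linarith) hgc
  have hl1 : l < 1 := (div_lt_one hgc).2 (by linarith)
  have hne : p ≠ c := by rintro rfl; exact lt_irrefl _ hpc
  have := key c (c + l⁻¹ • (p - c)) (by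
    intro hcon
    have h3 : l⁻¹ • (p - c) = 0 := by simpa using hcon
    rcases smul_eq_zero.1 h3 with h4 | h4
    · exact (inv_pos.2 hl).ne' h4
    · exact hne (sub_eq_zero.1 h4)) l hl hl1
  have e : (1 - l) • c + l • (c + l⁻¹ • (p - c)) = p := by
    rw [smul_add, smul_smul, mul_inv_cancel₀ hl.ne']; module
  rw [e] at this
  have h5 : (1 - l) * φ c ^ α = φ p ^ α := by rw [hld]; field_simp; ring
  have h6 : 0 < l * φ (c + l⁻¹ • (p - c)) ^ α := mul_pos hl (Real.rpow_pos_of_pos (hp _) _)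
  linarith
end

section
variable {m : ℕ}

lemma hyper_null {v : EuclideanSpace ℝ (Fin m)} (hv : v ≠ 0) (c : ℝ) : volume {z : EuclideanSpace ℝ (Fin m) | inner ℝ v z = c} = 0 := by
  by_cases hne : ∃ z0 : EuclideanSpace ℝ (Fin m), inner ℝ v z0 = c
  · obtain ⟨z0, hz0⟩ := hne
    rw [← measure_preimage_add_right volume z0]
    have : (fun z => z + z0) ⁻¹' {z : EuclideanSpace ℝ (Fin m) | inner ℝ v z = c}
        = (LinearMap.ker (innerSL ℝ v).toLinearMap : Submodule ℝ (EuclideanSpace ℝ (Fin m))) := by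
      ext z
      simp [inner_add_right, hz0]
    rw [this]
    apply Measure.addHaar_submodule
    intro htop
    have : v ∈ LinearMap.ker (innerSL ℝ v).toLinearMap := by rw [htop]; trivial
    simp at this
    exact hv this
  · have : {z : EuclideanSpace ℝ (Fin m) | inner ℝ v z = c} = ∅ := by
      ext z
      simp only [Set.mem_ofPred_eq, Set.mem_empty_iff_false, iff_false]
      exact fun h => hne ⟨z, h⟩
    simp [this]

lemma cut_cont {v : EuclideanSpace ℝ (Fin m)} (hv : v ≠ 0) {φ : EuclideanSpace ℝ (Fin m) → ℝ} (hφ : Continuous φ) {K : Set (EuclideanSpace ℝ (Fin m))}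
    (hK : IsCompact K) :
    Continuous (fun c : ℝ => ∫ z in K ∩ {z | inner ℝ v z ≤ c}, φ z) := by
  have hm : ∀ c : ℝ, MeasurableSet {z : EuclideanSpace ℝ (Fin m) | inner ℝ v z ≤ c} := fun c =>
    measurableSet_le (by fun_prop) measurable_const
  have e : (fun c : ℝ => ∫ z in K ∩ {z | inner ℝ v z ≤ c}, φ z)
      = fun c : ℝ => ∫ z in K, {z : EuclideanSpace ℝ (Fin m) | inner ℝ v z ≤ c}.indicator φ z := by
    ext c
    rw [setIntegral_indicator (hm c)]
  rw [e, continuous_iff_continuousAt]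
  intro c
  refine continuousAt_of_dominated (bound := fun z => |φ z|) ?_ ?_ ?_ ?_
  · exact Filter.Eventually.of_forall fun c =>
      (hφ.measurable.indicator (hm c)).aestronglyMeasurable
  · refine Filter.Eventually.of_forall fun c => Filter.Eventually.of_forall fun z => ?_
    exact norm_indicator_le_norm_self _ _
  · exact (hφ.continuousOn.integrableOn_compact hK).abs
  · have : ∀ᵐ z ∂(volume : Measure (EuclideanSpace ℝ (Fin m))), inner ℝ v z ≠ c := by
      rw [ae_iff]
      simpa using hyper_null hv c
    filter_upwards [ae_restrict_of_ae this] with z hz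
    rcases lt_or_gt_of_ne hz with h | h
    · have : (fun c : ℝ => {z : EuclideanSpace ℝ (Fin m) | inner ℝ v z ≤ c}.indicator φ z) =ᶠ[nhds c] fun _ => φ z := by
        filter_upwards [Ioi_mem_nhds h] with c' hc'
        exact Set.indicator_of_mem (s := {z : EuclideanSpace ℝ (Fin m) | inner ℝ v z ≤ c'}) 
          (by have h3 := Set.mem_Ioi.1 hc'; simpa using h3.le) φ
      exact continuousAt_const.congr this.symm
    · have : (fun c : ℝ => {z : EuclideanSpace ℝ (Fin m) | inner ℝ v z ≤ c}.indicator φ z) =ᶠ[nhds c] fun _ => 0 := by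
        filter_upwards [Iio_mem_nhds h] with c' hc'
        exact Set.indicator_of_notMem (s := {z : EuclideanSpace ℝ (Fin m) | inner ℝ v z ≤ c'})
          (by have h3 := Set.mem_Iio.1 hc'; simpa using h3) φ
      exact continuousAt_const.congr this.symm

lemma int_pos {φ : EuclideanSpace ℝ (Fin m) → ℝ} (hφ : Continuous φ) (hφ0 : ∀ x, 0 < φ x) {K : Set (EuclideanSpace ℝ (Fin m))}
    (hK : IsCompact K) (hKi : (interior K).Nonempty) : 0 < ∫ z in K, φ z := by
  rw [setIntegral_pos_iff_support_of_nonneg_ae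
    (Filter.Eventually.of_forall fun z => (hφ0 z).le) (hφ.continuousOn.integrableOn_compact hK)]
  have : Function.support φ = Set.univ := by
    ext z; simp [(hφ0 z).ne']
  rw [this, Set.univ_inter]
  exact lt_of_lt_of_le (isOpen_interior.measure_pos volume hKi) (measure_mono interior_subset)
end

theorem stmt9 {m : ℕ} (hm : 0 < m) (Ω : Set (EuclideanSpace ℝ (Fin m)))
    (hconv : Convex ℝ Ω) (hcomp : IsCompact Ω) (hint : (interior Ω).Nonempty)
    (α : ℝ) (hα : -1 / (m : ℝ) < α)
    (φ : EuclideanSpace ℝ (Fin m) → ℝ) (hcont : Continuous φ)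
    (hnn : ∀ v, 0 ≤ φ v) (hconc : StrictAlphaConcave (α : EReal) φ) :
    StrictAlphaConcave ((α / (1 + (m : ℝ) * α) : ℝ) : EReal)
      (fun x : EuclideanSpace ℝ (Fin m) => ∫ y in Ω, φ (x - y)) := by
  have hne : Nonempty (Fin m) := ⟨⟨0, hm⟩⟩
  have hφ0 := strict_pos hnn hconc
  have hα0 := strict_alpha_nonpos hnn hconc
  have hmp : (0 : ℝ) < m := by exact_mod_cast hm
  have hα1 : 0 < 1 + m * α := by
    rw [div_lt_iff₀ hmp] at hα; linarith
  intro x0 x1 hx l hl hl1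
  have h1l : 0 < 1 - l := by linarith
  set γ := α / (1 + (m : ℝ) * α) with hγ
  -- the reflected translates
  let K : EuclideanSpace ℝ (Fin m) → Set (EuclideanSpace ℝ (Fin m)) := fun x => {z | x - z ∈ Ω}
  have hKpre : ∀ x, K x = (Homeomorph.subLeft x) ⁻¹' Ω := fun x => rfl
  have hKc : ∀ x, IsCompact (K x) := fun x => by
    rw [hKpre, Homeomorph.isCompact_preimage]; exact hcomp
  have hKi : ∀ x, (interior (K x)).Nonempty := fun x => by
    rw [hKpre, ← Homeomorph.preimage_interior]
    exact hint.preimage (Homeomorph.subLeft x).surjective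
  have hKm : ∀ x, MeasurableSet (K x) := fun x => (hKc x).measurableSet
  have hKconv : ∀ x y, ∀ z ∈ K x, ∀ w ∈ K y,
      (1 - l) • z + l • w ∈ K ((1 - l) • x + l • y) := by
    intro x y z hz w hw
    have := hconv hz hw h1l.le hl.le (by ring)
    have e : (1 - l) • x + l • y - ((1 - l) • z + l • w) = (1 - l) • (x - z) + l • (y - w) := by
      module
    change _ - _ ∈ Ω
    rw [e]; exact this
  have hKcv : ∀ x, Convex ℝ (K x) := by
    intro x z hz w hw a b ha hb hab
    have := hconv hz hw ha hb hab
    have e : x - (a • z + b • w) = a • (x - z) + b • (x - w) := by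
      have : x = (a + b) • x := by rw [hab, one_smul]
      nth_rw 1 [this]
      module
    change _ - _ ∈ Ω
    rw [e]; exact this
  have hG : ∀ x, ∫ y in Ω, φ (x - y) = ∫ z in K x, φ z := by
    intro x
    rw [← integral_indicator hcomp.measurableSet, ← integral_indicator (hKm x),
      ← integral_sub_left_eq_self _ volume x]
    congr 1
    ext y
    by_cases h : x - y ∈ Ω
    · have h' : y ∈ K x := h
      rw [Set.indicator_of_mem h, Set.indicator_of_mem h', sub_sub_cancel]
    · have h' : y ∉ K x := h
      rw [Set.indicator_of_notMem h, Set.indicator_of_notMem h']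
  have hGp : ∀ x, 0 < ∫ z in K x, φ z := fun x => int_pos hcont hφ0 (hKc x) (hKi x)
  simp only [hG]
  rw [powMean_eq_pmr (hGp x0) (hGp x1)]
  set xl := (1 - l) • x0 + l • x1 with hxl
  set A0 := ∫ z in K x0, φ z with hA0
  set A1 := ∫ z in K x1, φ z with hA1
  have hA0p : 0 < A0 := hGp x0
  have hA1p : 0 < A1 := hGp x1
  set v := x1 - x0 with hv
  have hv0 : v ≠ 0 := sub_ne_zero.2 hx.symm
  have hvv : 0 < inner ℝ v v := real_inner_self_pos.2 hv0
  let Lo : ℝ → Set (EuclideanSpace ℝ (Fin m)) := fun c => {z | inner ℝ v z ≤ c}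
  have hLoc : ∀ c, IsClosed (Lo c) := fun c => isClosed_le (by fun_prop) continuous_const
  have hLom : ∀ c, MeasurableSet (Lo c) := fun c => (hLoc c).measurableSet
  have hint' : ∀ x, IntegrableOn φ (K x) := fun x => hcont.continuousOn.integrableOn_compact (hKc x)
  have hsplit : ∀ x c, ∫ z in K x, φ z = (∫ z in K x ∩ Lo c, φ z) + ∫ z in K x \ Lo c, φ z :=
    fun x c => (integral_inter_add_sdiff (hLom c) (hint' x)).symm
  have hIcont : ∀ x, Continuous (fun c : ℝ => ∫ z in K x ∩ Lo c, φ z) := fun x =>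
    cut_cont hv0 hcont (hKc x)
  -- the lowest point of `K x0`
  obtain ⟨p, hpK, hpmin⟩ := (hKc x0).exists_isMinOn ((hKi x0).mono interior_subset)
    (f := fun z => inner ℝ v z) (by fun_prop)
  set c0 := inner ℝ v p + inner ℝ v v / 2 with hc0
  have hB0p : 0 < ∫ z in K x0 ∩ Lo c0, φ z := by
    refine int_pos hcont hφ0 ((hKc x0).inter_right (hLoc c0)) ?_
    have hcl : p ∈ closure (interior (K x0)) := by
      rw [(hKcv x0).closure_interior_eq_closure_of_nonempty_interior (hKi x0)]
      exact subset_closure hpK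
    have hop : IsOpen {z : EuclideanSpace ℝ (Fin m) | inner ℝ v z < c0} :=
      isOpen_lt (by fun_prop) continuous_const
    obtain ⟨q, hq1, hq2⟩ := mem_closure_iff.1 hcl _ hop (by
      change inner ℝ v p < c0; linarith)
    refine ⟨q, ?_⟩
    rw [mem_interior]
    refine ⟨interior (K x0) ∩ {z | inner ℝ v z < c0}, ?_, isOpen_interior.inter hop, hq2, hq1⟩
    rintro z ⟨hz1, hz2⟩
    have hz3 : inner ℝ v z < c0 := hz2
    exact ⟨interior_subset hz1, hz3.le⟩
  set u := (∫ z in K x0 ∩ Lo c0, φ z) / A0 with hu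
  have hup : 0 < u := div_pos hB0p hA0p
  have hR0 : ∀ x c, 0 ≤ ∫ z in K x \ Lo c, φ z := fun x c =>
    integral_nonneg hnn
  have hu1 : u ≤ 1 := by
    rw [hu, div_le_one hA0p, hA0, hsplit x0 c0]
    linarith [hR0 x0 c0]
  have hB0 : ∫ z in K x0 ∩ Lo c0, φ z = u * A0 := by rw [hu]; field_simp
  -- matching cut of `K x1`
  obtain ⟨c1, hB1⟩ : ∃ c1, ∫ z in K x1 ∩ Lo c1, φ z = u * A1 := by
    obtain ⟨a, ha⟩ := (hKc x1).bddBelow_image (f := fun z => inner ℝ v z) (by fun_prop)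
    obtain ⟨b, hb⟩ := (hKc x1).bddAbove_image (f := fun z => inner ℝ v z) (by fun_prop)
    have e1 : K x1 ∩ Lo (a - 1) = ∅ := by
      ext z
      simp only [Set.mem_inter_iff, Set.mem_empty_iff_false, iff_false, not_and]
      intro hz hz2
      have h3 : a ≤ inner ℝ v z := ha ⟨z, hz, rfl⟩
      have h4 : inner ℝ v z ≤ a - 1 := hz2
      linarith
    have e2 : K x1 ∩ Lo b = K x1 := by
      apply Set.inter_eq_left.2
      intro z hz
      exact hb ⟨z, hz, rfl⟩
    have := mem_range_of_exists_le_of_exists_ge (c := u * A1) (hIcont x1)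
      ⟨a - 1, by simp only [e1]; simp; positivity⟩
      ⟨b, by simp only [e2]; rw [← hA1]; nlinarith⟩
    exact this
  -- the two compact pieces are disjoint
  set P0 := K x0 ∩ Lo c0 with hP0
  set P1 := K x1 ∩ Lo c1 with hP1
  have hP0c : IsCompact P0 := (hKc x0).inter_right (hLoc c0)
  have hP1c : IsCompact P1 := (hKc x1).inter_right (hLoc c1)
  have hB1p : 0 < ∫ z in P1, φ z := by rw [hB1]; positivity
  have hP0n : P0.Nonempty := by
    by_contra h
    rw [Set.not_nonempty_iff_eq_empty] at h
    rw [h] at hB0p; simp at hB0p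
  have hP1n : P1.Nonempty := by
    by_contra h
    rw [Set.not_nonempty_iff_eq_empty] at h
    rw [h] at hB1p; simp at hB1p
  have hdisj : ∀ z ∈ P0, ∀ w ∈ P1, z ≠ w := by
    rintro z hz w hw rfl
    have h2 : inner ℝ v z ≤ c0 := hz.2
    have h3 : z - v ∈ K x0 := by
      have : x1 - z ∈ Ω := hw.1
      change x0 - (z - v) ∈ Ω
      have e : x0 - (z - v) = x1 - z := by rw [hv]; abel
      rwa [e]
    have h4 : inner ℝ v p ≤ inner ℝ v (z - v) := hpmin h3
    rw [inner_sub_right] at h4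
    linarith
  -- uniform gain
  obtain ⟨κ, hκ1, hκ⟩ : ∃ κ : ℝ, 1 < κ ∧ ∀ z ∈ P0, ∀ w ∈ P1,
      κ * pmr α l (φ z) (φ w) ≤ φ ((1 - l) • z + l • w) := by
    have hpc : Continuous (fun q : EuclideanSpace ℝ (Fin m) × EuclideanSpace ℝ (Fin m) =>
        pmr α l (φ q.1) (φ q.2)) :=
      pmr_cont hl hl1 (hcont.comp continuous_fst) (hcont.comp continuous_snd)
        (fun _ => hφ0 _) (fun _ => hφ0 _)
    have hpp : ∀ z w, 0 < pmr α l (φ z) (φ w) := fun z w => pmr_pos hl hl1 (hφ0 z) (hφ0 w)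
    have hrc : Continuous (fun q : EuclideanSpace ℝ (Fin m) × EuclideanSpace ℝ (Fin m) =>
        φ ((1 - l) • q.1 + l • q.2) / pmr α l (φ q.1) (φ q.2)) :=
      Continuous.div (hcont.comp (by fun_prop)) hpc (fun q => (hpp _ _).ne')
    obtain ⟨q, hq, hqmin⟩ := (hP0c.prod hP1c).exists_isMinOn (hP0n.prod hP1n) hrc.continuousOn
    refine ⟨φ ((1 - l) • q.1 + l • q.2) / pmr α l (φ q.1) (φ q.2), ?_, fun z hz w hw => ?_⟩
    · rw [one_lt_div (hpp _ _)]
      have := hconc q.1 q.2 (hdisj _ hq.1 _ hq.2) l hl hl1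
      rwa [powMean_eq_pmr (hφ0 _) (hφ0 _)] at this
    · rw [← le_div_iff₀ (hpp z w)]
      exact hqmin (Set.mk_mem_prod hz hw)
  set cl := (1 - l) * c0 + l * c1 with hcl
  have hMp : 0 < pmr γ l A0 A1 := pmr_pos hl hl1 hA0p hA1p
  have hlow : κ * (u * pmr γ l A0 A1) ≤ ∫ z in K xl ∩ Lo cl, φ z := by
    have := bbl_euclid hα0 hα1 hl hl1 hcont hφ0 hP0c.measurableSet hP1c.measurableSet
      ((hKm xl).inter (hLom cl)) hP0c.isBounded hP1c.isBounded
      ((hKc xl).isBounded.subset Set.inter_subset_left) (by linarith) hB0p hB1p ?_ hκ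
    · rwa [hB0, hB1, pmr_smul hl hl1 hA0p hA1p hup] at this
    · intro z hz w hw
      refine ⟨hKconv _ _ z hz.1 w hw.1, ?_⟩
      change inner ℝ v _ ≤ cl
      have h2 : inner ℝ v z ≤ c0 := hz.2
      have h3 : inner ℝ v w ≤ c1 := hw.2
      rw [inner_add_right, inner_smul_right, inner_smul_right]
      exact add_le_add (mul_le_mul_of_nonneg_left h2 h1l.le) (mul_le_mul_of_nonneg_left h3 hl.le)
  have hhigh : (1 - u) * pmr γ l A0 A1 ≤ ∫ z in K xl \ Lo cl, φ z := by
    rcases eq_or_lt_of_le hu1 with h | h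
    · rw [h, sub_self, zero_mul]; exact hR0 _ _
    · have hup' : 0 < 1 - u := by linarith
      have e0 : ∫ z in K x0 \ Lo c0, φ z = (1 - u) * A0 := by
        have := hsplit x0 c0
        rw [← hA0, hB0] at this; linarith
      have e1 : ∫ z in K x1 \ Lo c1, φ z = (1 - u) * A1 := by
        have := hsplit x1 c1
        rw [← hA1, hB1] at this; linarith
      have := bbl_euclid hα0 hα1 hl hl1 hcont hφ0 ((hKm x0).diff (hLom c0))
        ((hKm x1).diff (hLom c1)) ((hKm xl).diff (hLom cl))
        ((hKc x0).isBounded.subset Set.sdiff_subset) ((hKc x1).isBounded.subset Set.sdiff_subset)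
        ((hKc xl).isBounded.subset Set.sdiff_subset) one_pos (by rw [e0]; positivity)
        (by rw [e1]; positivity) ?_ ?_
      · rwa [e0, e1, pmr_smul hl hl1 hA0p hA1p hup', one_mul] at this
      · intro z hz w hw
        refine ⟨hKconv _ _ z hz.1 w hw.1, ?_⟩
        change ¬ (inner ℝ v _ ≤ cl)
        have h2 : c0 < inner ℝ v z := not_le.1 hz.2
        have h3 : c1 < inner ℝ v w := not_le.1 hw.2
        rw [inner_add_right, inner_smul_right, inner_smul_right, not_le]
        exact add_lt_add (mul_lt_mul_of_pos_left h2 h1l) (mul_lt_mul_of_pos_left h3 hl)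
      · intro z hz w hw
        rw [one_mul]
        by_cases hzw : z = w
        · subst hzw
          have e : (1 - l) • z + l • z = z := by module
          rw [e]
          have h1 : pmr α l (φ z * 1) (φ z * 1) = φ z * pmr α l 1 1 :=
            pmr_smul hl hl1 one_pos one_pos (hφ0 z)
          have h2 : pmr α l 1 1 = 1 := by simp [pmr]
          rw [h2, mul_one] at h1
          exact h1.le
        · have := hconc z w hzw l hl hl1
          rw [powMean_eq_pmr (hφ0 _) (hφ0 _)] at this
          exact this.le
  rw [hsplit xl cl]
  have : 0 < u * pmr γ l A0 A1 := by positivity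
  nlinarith
end
end
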